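/- arXiv:1610.05969 — 4 statements merged into one kernel-verified Lean document; each statement's English description precedes it below -/
import Mathlib

section
/- Diagonal expansion of the rescaled kernel: for every integer N ≥ 2 and all real x, writing x_N = √N · x, one has L^N(x,x) = (√N/2) · { ψ_{N-1}(x_N)² + ψ_N(x_N)² − √(1 − 1/N) · ψ_{N-2}(x_N) ψ_N(x_N) − √(1 + 1/N) · ψ_{N-1}(x_N) ψ_{N+1}(x_N) }. -/
open Real MeasureTheory Filter Set

/-- Physicists' Hermite polynomial `H_n(x) = (-1)^n e^{x^2} (d/dx)^n e^{-x^2}`. -/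
noncomputable def hermiteP (n : ℕ) (x : ℝ) : ℝ :=
  (-1 : ℝ) ^ n * Real.exp (x ^ 2) * iteratedDeriv n (fun t => Real.exp (-t ^ 2)) x

/-- Oscillator wave function `ψ_n(x) = (√π 2^n n!)^{-1/2} e^{-x^2/2} H_n(x)`. -/
noncomputable def osc (n : ℕ) (x : ℝ) : ℝ :=
  (Real.sqrt (Real.sqrt Real.pi * 2 ^ n * (n.factorial : ℝ)))⁻¹ *
    Real.exp (-x ^ 2 / 2) * hermiteP n x

/-- The kernel `K^N(x,y) = Σ_{k=0}^{N-1} ψ_k(x) ψ_k(y)`. -/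
noncomputable def kerK (N : ℕ) (x y : ℝ) : ℝ :=
  ∑ k ∈ Finset.range N, osc k x * osc k y

/-- The rescaled kernel `L^N(x,y) = N^{-1/2} K^N(√N x, √N y)`. -/
noncomputable def kerL (N : ℕ) (x y : ℝ) : ℝ :=
  (Real.sqrt (N : ℝ))⁻¹ * kerK N (Real.sqrt (N : ℝ) * x) (Real.sqrt (N : ℝ) * y)

/-!
A three-term recurrence `z p_n = c_{n+1} p_{n+1} + c_n p_{n-1}` with `c_0 = 0` makes the
Turán-type expression `T_n = c_n² p_n² - c_n c_{n+1} p_{n-1} p_{n+1}` telescope: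
`T_{n+1} - T_n = (c_{n+1}² - c_n²) p_n²`. The Leibniz rule applied to
`d/dt e^{-t²} = -2 t e^{-t²}` gives such a recurrence for the oscillator wave functions, with
`z = √2 x` and `c_n = √n`; the weights `c_{n+1}² - c_n²` are then all `1`, so `K^N(x,x) = T_N`.
Averaging this with `K^N(x,x) = T_{N-1} + ψ_{N-1}(x)²` gives the symmetric expansion.
-/

/-- At `n = 0` the truncated index `n - 1` is harmless because its coefficient `c 0` vanishes. -/
theorem sum_sq_sub_sq_mul_sq_of_three_term {R : Type*} [CommRing R] {c p : ℕ → R} {z : R}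
    (hc : c 0 = 0) (hp : ∀ n, z * p n = c (n + 1) * p (n + 1) + c n * p (n - 1)) (n : ℕ) :
    ∑ k ∈ Finset.range n, (c (k + 1) ^ 2 - c k ^ 2) * p k ^ 2 =
      c n ^ 2 * p n ^ 2 - c n * c (n + 1) * p (n - 1) * p (n + 1) := by
  induction n with
  | zero => simp [hc]
  | succ n ih =>
    have hp_succ := hp (n + 1)
    rw [Finset.sum_range_succ, ih]
    rw [Nat.add_sub_cancel] at hp_succ ⊢
    linear_combination c (n + 1) * p (n + 1) * hp n - c (n + 1) * p n * hp_succ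

theorem sqrt_mul_sqrt_one_add_div {a : ℝ} (ha : 0 < a) (b : ℝ) : √a * √(1 + b / a) = √(a + b) := by
  rw [← sqrt_mul ha.le, mul_one_add, mul_div_cancel₀ b ha.ne']

theorem iteratedDeriv_id_mul {𝕜 : Type*} [NontriviallyNormedField 𝕜] {f : 𝕜 → 𝕜} {n : ℕ}
    {x : 𝕜} (hf : ContDiffAt 𝕜 n f x) :
    iteratedDeriv n (fun t ↦ t * f t) x =
      x * iteratedDeriv n f x + n * iteratedDeriv (n - 1) f x := by
  rw [iteratedDeriv_fun_mul contDiffAt_fun_id hf]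
  cases n with
  | zero => simp
  | succ n =>
    rw [Finset.sum_range_succ', Finset.sum_range_succ', Finset.sum_eq_zero]
    · simp [iteratedDeriv_fun_id, add_comm]
    · simp [iteratedDeriv_fun_id]

theorem deriv_exp_neg_sq :
    deriv (fun t : ℝ ↦ exp (-t ^ 2)) = fun t ↦ -2 * (t * exp (-t ^ 2)) := by
  ext t
  rw [deriv_exp (by fun_prop), deriv.fun_neg, deriv_pow_field]
  ring

theorem iteratedDeriv_succ_exp_neg_sq (n : ℕ) (x : ℝ) :
    iteratedDeriv (n + 1) (fun t : ℝ ↦ exp (-t ^ 2)) x =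
      -2 * (x * iteratedDeriv n (fun t : ℝ ↦ exp (-t ^ 2)) x +
        n * iteratedDeriv (n - 1) (fun t : ℝ ↦ exp (-t ^ 2)) x) := by
  rw [iteratedDeriv_succ', deriv_exp_neg_sq, iteratedDeriv_const_mul_field,
    iteratedDeriv_id_mul (by fun_prop)]

theorem hermiteP_succ (n : ℕ) (x : ℝ) :
    hermiteP (n + 1) x = 2 * x * hermiteP n x - 2 * n * hermiteP (n - 1) x := by
  simp only [hermiteP, iteratedDeriv_succ_exp_neg_sq]
  cases n with
  | zero => rw [Nat.cast_zero]; ring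
  | succ n => rw [Nat.add_sub_cancel]; ring

/-- The constant `(√π 2^n n!)^{-1/2}` that makes the wave function `osc n` a unit vector of
`L²(ℝ)`. -/
noncomputable def oscNorm (n : ℕ) : ℝ :=
  (√(√π * 2 ^ n * (n.factorial : ℝ)))⁻¹

theorem osc_eq_oscNorm_mul (n : ℕ) (x : ℝ) :
    osc n x = oscNorm n * exp (-x ^ 2 / 2) * hermiteP n x :=
  rfl

theorem sqrt_two_mul_oscNorm_succ (n : ℕ) :
    √2 * (√(n + 1) * oscNorm (n + 1)) = oscNorm n := by
  have radicand_succ : √π * 2 ^ (n + 1) * ((n + 1).factorial : ℝ) =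
      2 * ((n + 1) * (√π * 2 ^ n * (n.factorial : ℝ))) := by
    push_cast [Nat.factorial_succ]
    ring
  rw [oscNorm, radicand_succ, sqrt_mul (by positivity), sqrt_mul (by positivity), oscNorm]
  field_simp

theorem sqrt_two_mul_mul_osc (n : ℕ) (x : ℝ) :
    √2 * x * osc n x = √(n + 1 : ℕ) * osc (n + 1) x + √n * osc (n - 1) x := by
  have sq_sqrt_two : √2 ^ 2 = (2 : ℝ) := sq_sqrt zero_le_two
  have norm_up := sqrt_two_mul_oscNorm_succ n
  have norm_down : n * (√2 * oscNorm n) = √n * oscNorm (n - 1) := by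
    cases n with
    | zero => simp
    | succ n =>
      have sq_sqrt_succ : √(n + 1 : ℝ) ^ 2 = n + 1 := sq_sqrt (by positivity)
      rw [Nat.add_sub_cancel, ← sqrt_two_mul_oscNorm_succ n]
      push_cast
      linear_combination -(√2 * oscNorm (n + 1)) * sq_sqrt_succ
  simp only [osc_eq_oscNorm_mul, hermiteP_succ]
  push_cast
  linear_combination exp (-x ^ 2 / 2) * (
    hermiteP (n - 1) x * norm_down
    - √2 * (x * hermiteP n x - n * hermiteP (n - 1) x) * norm_up
    + √(n + 1) * oscNorm (n + 1) * (x * hermiteP n x - n * hermiteP (n - 1) x) * sq_sqrt_two)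

theorem kerK_self (n : ℕ) (x : ℝ) :
    kerK n x x = n * osc n x ^ 2 - √n * √(n + 1 : ℕ) * osc (n - 1) x * osc (n + 1) x := by
  have telescoped := sum_sq_sub_sq_mul_sq_of_three_term (c := fun k ↦ √k) (by simp)
    (fun k ↦ sqrt_two_mul_mul_osc k x) n
  simpa [kerK, sq_sqrt, Nat.cast_nonneg, add_nonneg, ← sq] using telescoped

theorem kerK_succ (n : ℕ) (x y : ℝ) : kerK (n + 1) x y = kerK n x y + osc n x * osc n y :=
  Finset.sum_range_succ ..

theorem two_mul_kerK_succ_self (n : ℕ) (x : ℝ) :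
    2 * kerK (n + 1) x x =
      (n + 1 : ℕ) * (osc n x ^ 2 + osc (n + 1) x ^ 2)
        - √n * √(n + 1 : ℕ) * osc (n - 1) x * osc (n + 1) x
        - √(n + 1 : ℕ) * √(n + 2 : ℕ) * osc n x * osc (n + 2) x := by
  have telescope_to_succ := kerK_self (n + 1) x
  have telescope_to_self := kerK_self n x
  rw [Nat.add_sub_cancel] at telescope_to_succ
  linear_combination telescope_to_succ + telescope_to_self + kerK_succ n x x
    - osc n x ^ 2 * Nat.cast_succ (R := ℝ) n

/-- Diagonal expansion of the rescaled kernel. -/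
theorem diagonal_expansion (N : ℕ) (hN : 2 ≤ N) (x : ℝ) :
    kerL N x x =
      (Real.sqrt (N : ℝ) / 2) *
        (osc (N - 1) (Real.sqrt (N : ℝ) * x) ^ 2 + osc N (Real.sqrt (N : ℝ) * x) ^ 2 -
          Real.sqrt (1 - 1 / (N : ℝ)) *
            osc (N - 2) (Real.sqrt (N : ℝ) * x) * osc N (Real.sqrt (N : ℝ) * x) -
          Real.sqrt (1 + 1 / (N : ℝ)) *
            osc (N - 1) (Real.sqrt (N : ℝ) * x) * osc (N + 1) (Real.sqrt (N : ℝ) * x)) := by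
  obtain ⟨n, rfl⟩ : ∃ n, N = n + 1 := ⟨N - 1, by omega⟩
  have N_pos : (0 : ℝ) < (n + 1 : ℕ) := by positivity
  have sq_sqrt_N : √(n + 1 : ℕ) ^ 2 = (n + 1 : ℕ) := sq_sqrt N_pos.le
  have sqrt_pred : √(n + 1 : ℕ) * √(1 - 1 / (n + 1 : ℕ)) = √n := by
    simpa [neg_div, ← sub_eq_add_neg] using sqrt_mul_sqrt_one_add_div N_pos (-1)
  have sqrt_succ : √(n + 1 : ℕ) * √(1 + 1 / (n + 1 : ℕ)) = √(n + 2 : ℕ) := by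
    rw [sqrt_mul_sqrt_one_add_div N_pos, ← Nat.cast_succ]
  rw [kerL, inv_mul_eq_iff_eq_mul₀ (sqrt_ne_zero'.2 N_pos), Nat.add_sub_cancel,
    show n + 1 - 2 = n - 1 from rfl]
  generalize √(n + 1 : ℕ) * x = y
  linear_combination two_mul_kerK_succ_self n y / 2
    - (osc n y ^ 2 + osc (n + 1) y ^ 2) / 2 * sq_sqrt_N
    + √(n + 1 : ℕ) / 2 * osc (n - 1) y * osc (n + 1) y * sqrt_pred
    + √(n + 1 : ℕ) / 2 * osc n y * osc (n + 2) y * sqrt_succ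
end

section
/- Plancherel–Rotach bulk estimate for the diagonal kernel: for every C > 0 and ε > 0 there exists a constant c > 0 such that for every integer N ≥ 1 and every τ ∈ (0, π/2] with N sin³τ ≥ C N^ε, setting y = √(2N) cos τ, one has | Σ_{k=0}^{N-1} ψ_k(y)² − (1/π)√(2N − y²) | ≤ c · √N / (2N − y²). -/
open Real MeasureTheory Filter Set

/-!
The function `u = ψ_N` solves the Weber equation `u'' = (t² - (A + 1)) u` with `A = 2N`, and the
Hermite recurrences turn the diagonal kernel into the energy `(u'² + p² u²) / 2` of this oscillator
at the slowly varying frequency `p = √(A - t²)`. The action, energy over frequency, is an adiabatic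
invariant: after integrating the oscillating part of its derivative by parts, it drifts by a
relative amount `O(√A / p³)` on `[0, t]`. At the origin Wallis' product shows that it equals
`(1 + O(1 / N)) / π`, which gives the estimate with an absolute constant where `p³ ≥ 6 √A`. Closer
to the turning point both terms are `O(√A / p²)`, because the energy grows at logarithmic rate at
most `1 / p = (arcsin (t / √A))'`, whose integral stays bounded.
-/

/-! ### Adiabatic invariance of the action -/

/-- Bootstrap: `F` varies little compared with the maximum of `E`, hence so does `E` itself, and
`B b ≤ 1 / 4` then bounds that maximum by `2 E a`. -/
lemma abs_sub_le_of_abs_deriv_correction_le {a b : ℝ} {E F F' B B' : ℝ → ℝ} (hab : a ≤ b)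
    (hE : ContinuousOn E (Icc a b)) (hE_nonneg : ∀ t ∈ Icc a b, 0 ≤ E t)
    (hF : ∀ t ∈ Icc a b, HasDerivAt F (F' t) t) (hB : ∀ t ∈ Icc a b, HasDerivAt B (B' t) t)
    (hBa : 0 ≤ B a) (hB'_nonneg : ∀ t ∈ Icc a b, 0 ≤ B' t)
    (hFE : ∀ t ∈ Icc a b, |F t - E t| ≤ E t * B t)
    (hF' : ∀ t ∈ Icc a b, |F' t| ≤ E t * B' t) (hBb : B b ≤ 1 / 4) :
    |E b - E a| ≤ 4 * E a * B b := by
  have ha : a ∈ Icc a b := left_mem_Icc.2 hab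
  have hb : b ∈ Icc a b := right_mem_Icc.2 hab
  have hBcont : ContinuousOn B (Icc a b) := HasDerivAt.continuousOn hB
  have hFcont : ContinuousOn F (Icc a b) := HasDerivAt.continuousOn hF
  have hBmono : MonotoneOn B (Icc a b) :=
    monotoneOn_of_hasDerivWithinAt_nonneg (convex_Icc a b) hBcont
      (fun t ht => (hB t (interior_subset ht)).hasDerivWithinAt)
      (fun t ht => hB'_nonneg t (interior_subset ht))
  obtain ⟨s, hs, hmax⟩ := isCompact_Icc.exists_isMaxOn ⟨a, ha⟩ hE
  have hdrift : ∀ t ∈ Icc a b, |F t - F a| ≤ E s * (B t - B a) := fun t ht =>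
    image_norm_le_of_norm_deriv_right_le_deriv_boundary'
      (f := fun t => F t - F a) (B := fun t => E s * (B t - B a))
      (by fun_prop)
      (fun r hr => ((hF r (Ico_subset_Icc_self hr)).sub_const _).hasDerivWithinAt)
      (by simp) (by fun_prop)
      (fun r hr =>
        (((hB r (Ico_subset_Icc_self hr)).sub_const _).const_mul _).hasDerivWithinAt)
      (fun r hr => (hF' r (Ico_subset_Icc_self hr)).trans <|
        mul_le_mul_of_nonneg_right (hmax (Ico_subset_Icc_self hr))
          (hB'_nonneg r (Ico_subset_Icc_self hr))) ht
  have hFEs : ∀ t ∈ Icc a b, |F t - E t| ≤ E s * B t := fun t ht =>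
    (hFE t ht).trans <|
      mul_le_mul_of_nonneg_right (hmax ht) (hBa.trans (hBmono ha ht ht.1))
  have hvar : ∀ t ∈ Icc a b, |E t - E a| ≤ 2 * E s * B b := fun t ht => by
    have ht_err := abs_le.1 (hFEs t ht)
    have ha_err := abs_le.1 (hFEs a ha)
    have ht_drift := abs_le.1 (hdrift t ht)
    have hBt := mul_le_mul_of_nonneg_left (hBmono ht hb ht.2) (hE_nonneg s hs)
    exact abs_le.2 ⟨by linarith, by linarith⟩
  have hBb_nonneg : 0 ≤ B b := hBa.trans (hBmono ha hb hab)
  have hEs : E s ≤ 2 * E a := by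
    have hvar_s := (abs_le.1 (hvar s hs)).2
    have := mul_le_mul_of_nonneg_left hBb (hE_nonneg s hs)
    linarith
  calc |E b - E a| ≤ 2 * E s * B b := hvar b hb
    _ ≤ 2 * (2 * E a) * B b := by gcongr
    _ = 4 * E a * B b := by ring

/-- `u` solves the Weber equation `u'' = (t² - (A + 1)) u`; the constant is split off so that the
energy at frequency `√(A - t²)` of `ψ_N`, where `A = 2N`, is exactly the diagonal kernel. -/
structure IsWeberSolution (A : ℝ) (u : ℝ → ℝ) : Prop where
  differentiable : Differentiable ℝ u
  hasDerivAt_deriv : ∀ t, HasDerivAt (deriv u) ((t ^ 2 - (A + 1)) * u t) t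

/-- The slowly varying frequency `√(A - t²)` of the Weber equation, meaningful for `t² ≤ A`. -/
noncomputable def weberFreq (A t : ℝ) : ℝ := √(A - t ^ 2)

/-- The energy `(u'² + p² u²) / 2` of an oscillator `u` with frequency `p = √(A - t²)`. -/
noncomputable def weberEnergy (A : ℝ) (u : ℝ → ℝ) (t : ℝ) : ℝ :=
  (deriv u t ^ 2 + (A - t ^ 2) * u t ^ 2) / 2

/-- The action, energy divided by frequency: the adiabatic invariant of the Weber equation. -/
noncomputable def weberAction (A : ℝ) (u : ℝ → ℝ) (t : ℝ) : ℝ :=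
  weberEnergy A u t / weberFreq A t

/-- The action with the leading oscillating part of its derivative, `-u u' / p + t (u'² - p² u²) /
(2 p³)`, integrated by parts. -/
noncomputable def correctedWeberAction (A : ℝ) (u : ℝ → ℝ) (t : ℝ) : ℝ :=
  weberAction A u t + u t ^ 2 / (2 * weberFreq A t) -
    t * (u t * deriv u t) / (2 * weberFreq A t ^ 3)

/-- The relative size of the correction in `correctedWeberAction`; its derivative also dominates
the relative drift of the corrected action. -/
noncomputable def weberActionError (A t : ℝ) : ℝ :=
  1 / weberFreq A t ^ 2 + t / (2 * weberFreq A t ^ 3)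

section Weber

variable {A t : ℝ} {u : ℝ → ℝ}

lemma weberFreq_pos (ht : t ^ 2 < A) : 0 < weberFreq A t :=
  sqrt_pos.2 (sub_pos.2 ht)

lemma sq_weberFreq (ht : t ^ 2 ≤ A) : weberFreq A t ^ 2 = A - t ^ 2 :=
  sq_sqrt (sub_nonneg.2 ht)

lemma weberFreq_zero (A : ℝ) : weberFreq A 0 = √A := by
  simp [weberFreq]

lemma weberFreq_le_sqrt (A t : ℝ) : weberFreq A t ≤ √A :=
  sqrt_le_sqrt (sub_le_self A (sq_nonneg t))

lemma hasDerivAt_weberFreq (ht : t ^ 2 < A) :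
    HasDerivAt (weberFreq A) (-t / weberFreq A t) t := by
  refine (((hasDerivAt_pow 2 t).const_sub A).sqrt (sub_pos.2 ht).ne').congr_deriv ?_
  rw [← weberFreq]
  field_simp
  norm_num

lemma weberFreq_mul_abs_mul_deriv_le (u : ℝ → ℝ) (ht : t ^ 2 ≤ A) :
    weberFreq A t * |u t * deriv u t| ≤ weberEnergy A u t := by
  have hp : 0 ≤ weberFreq A t := sqrt_nonneg _
  rw [weberEnergy, ← sq_weberFreq ht, ← abs_of_nonneg hp, ← abs_mul, abs_of_nonneg hp, abs_le]
  constructor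
  · linarith [sq_nonneg (deriv u t + weberFreq A t * u t)]
  · linarith [sq_nonneg (deriv u t - weberFreq A t * u t)]

lemma weberEnergy_nonneg (u : ℝ → ℝ) (ht : t ^ 2 ≤ A) : 0 ≤ weberEnergy A u t :=
  (mul_nonneg (sqrt_nonneg _) (abs_nonneg _)).trans (weberFreq_mul_abs_mul_deriv_le u ht)

lemma abs_mul_deriv_le_weberAction (u : ℝ → ℝ) (ht : t ^ 2 < A) :
    |u t * deriv u t| ≤ weberAction A u t :=
  (le_div_iff₀' (weberFreq_pos ht)).2 (weberFreq_mul_abs_mul_deriv_le u ht.le)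

lemma weberAction_nonneg (u : ℝ → ℝ) (ht : t ^ 2 < A) : 0 ≤ weberAction A u t :=
  div_nonneg (weberEnergy_nonneg u ht.le) (sqrt_nonneg _)

lemma sq_le_two_mul_weberAction_div (u : ℝ → ℝ) (ht : t ^ 2 < A) :
    u t ^ 2 ≤ 2 * weberAction A u t / weberFreq A t := by
  have hp := weberFreq_pos ht
  rw [weberAction, weberEnergy, ← sq_weberFreq ht.le]
  field_simp
  linarith [sq_nonneg (deriv u t)]

lemma hasDerivAt_weberActionError (ht : t ^ 2 < A) :
    HasDerivAt (weberActionError A)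
      (2 * t / weberFreq A t ^ 4 +
        (1 / (2 * weberFreq A t ^ 3) + 3 * t ^ 2 / (2 * weberFreq A t ^ 5))) t := by
  have hp := weberFreq_pos ht
  have hdp := hasDerivAt_weberFreq ht
  refine (((hasDerivAt_const t (1 : ℝ)).div (hdp.pow 2) (pow_ne_zero 2 hp.ne')).add
    ((hasDerivAt_id t).div ((hdp.pow 3).const_mul 2)
      (mul_ne_zero two_ne_zero (pow_ne_zero 3 hp.ne')))).congr_deriv ?_
  simp only [Pi.pow_apply, id]
  field_simp
  push_cast
  ring

lemma weberActionError_le (ht₀ : 0 ≤ t) (ht : t ^ 2 < A) :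
    weberActionError A t ≤ 3 / 2 * (√A / weberFreq A t ^ 3) := by
  have hp := weberFreq_pos ht
  have htA : t ≤ √A := le_sqrt_of_sq_le ht.le
  calc weberActionError A t
      = (weberFreq A t + t / 2) / weberFreq A t ^ 3 := by
        rw [weberActionError]
        field_simp
    _ ≤ (√A + √A / 2) / weberFreq A t ^ 3 := by
        gcongr
        exact weberFreq_le_sqrt A t
    _ = 3 / 2 * (√A / weberFreq A t ^ 3) := by ring

lemma abs_correctedWeberAction_sub_le (u : ℝ → ℝ) (ht₀ : 0 ≤ t) (ht : t ^ 2 < A) :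
    |correctedWeberAction A u t - weberAction A u t| ≤
      weberAction A u t * weberActionError A t := by
  have hp := weberFreq_pos ht
  have hsq : u t ^ 2 / (2 * weberFreq A t) ≤ weberAction A u t * (1 / weberFreq A t ^ 2) :=
    calc u t ^ 2 / (2 * weberFreq A t)
        ≤ 2 * weberAction A u t / weberFreq A t / (2 * weberFreq A t) := by
          gcongr
          exact sq_le_two_mul_weberAction_div u ht
      _ = weberAction A u t * (1 / weberFreq A t ^ 2) := by field_simp
  have hmul : |t * (u t * deriv u t) / (2 * weberFreq A t ^ 3)| ≤
      weberAction A u t * (t / (2 * weberFreq A t ^ 3)) := by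
    rw [mul_div_right_comm, abs_mul, abs_of_nonneg (by positivity), mul_comm]
    gcongr
    exact abs_mul_deriv_le_weberAction u ht
  rw [correctedWeberAction, weberActionError, mul_add, add_sub_assoc, add_sub_cancel_left]
  refine (abs_sub _ _).trans (add_le_add ?_ hmul)
  rwa [abs_of_nonneg (by positivity)]

namespace IsWeberSolution

lemma hasDerivAt_energy (h : IsWeberSolution A u) (t : ℝ) :
    HasDerivAt (weberEnergy A u) (-(u t * deriv u t) - t * u t ^ 2) t := by
  refine ((((h.hasDerivAt_deriv t).pow 2).add (((hasDerivAt_pow 2 t).const_sub A).mul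
    ((h.differentiable t).hasDerivAt.pow 2))).div_const 2).congr_deriv ?_
  simp only [Pi.pow_apply]
  push_cast
  ring

lemma hasDerivAt_action (h : IsWeberSolution A u) (ht : t ^ 2 < A) :
    HasDerivAt (weberAction A u)
      (-(u t * deriv u t) / weberFreq A t + t * (deriv u t ^ 2 - (A - t ^ 2) * u t ^ 2) /
        (2 * weberFreq A t ^ 3)) t := by
  have hp := weberFreq_pos ht
  refine ((h.hasDerivAt_energy t).div (hasDerivAt_weberFreq ht) hp.ne').congr_deriv ?_
  rw [weberEnergy, ← sq_weberFreq ht.le]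
  field_simp
  ring

lemma hasDerivAt_correctedAction (h : IsWeberSolution A u) (ht : t ^ 2 < A) :
    HasDerivAt (correctedWeberAction A u)
      (t * u t ^ 2 / weberFreq A t ^ 3 -
        (1 / (2 * weberFreq A t ^ 3) + 3 * t ^ 2 / (2 * weberFreq A t ^ 5)) *
          (u t * deriv u t)) t := by
  have hp := weberFreq_pos ht
  have hdp := hasDerivAt_weberFreq ht
  have hdu := (h.differentiable t).hasDerivAt
  have hA : A = weberFreq A t ^ 2 + t ^ 2 := by rw [sq_weberFreq ht.le, sub_add_cancel]
  refine (((h.hasDerivAt_action ht).add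
    ((hdu.pow 2).div (hdp.const_mul 2) (by positivity))).sub
    (((hasDerivAt_id t).mul (hdu.mul (h.hasDerivAt_deriv t))).div
      ((hdp.pow 3).const_mul 2) (mul_ne_zero two_ne_zero (pow_ne_zero 3 hp.ne')))).congr_deriv ?_
  simp only [Pi.mul_apply, Pi.pow_apply, id]
  generalize weberFreq A t = p at *
  rw [hA]
  field_simp
  push_cast
  ring

lemma abs_deriv_correctedAction_le (h : IsWeberSolution A u) (ht₀ : 0 ≤ t) (ht : t ^ 2 < A) :
    |deriv (correctedWeberAction A u) t| ≤
      weberAction A u t * deriv (weberActionError A) t := by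
  have hp := weberFreq_pos ht
  rw [(h.hasDerivAt_correctedAction ht).deriv, (hasDerivAt_weberActionError ht).deriv, mul_add]
  refine (abs_sub _ _).trans (add_le_add ?_ ?_)
  · rw [abs_of_nonneg (by positivity)]
    calc t * u t ^ 2 / weberFreq A t ^ 3
        ≤ t * (2 * weberAction A u t / weberFreq A t) / weberFreq A t ^ 3 := by
          gcongr
          exact sq_le_two_mul_weberAction_div u ht
      _ = weberAction A u t * (2 * t / weberFreq A t ^ 4) := by field_simp
  · rw [abs_mul, abs_of_nonneg (by positivity), mul_comm]
    gcongr
    exact abs_mul_deriv_le_weberAction u ht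

lemma abs_action_sub_le (h : IsWeberSolution A u) (ht₀ : 0 ≤ t) (ht : t ^ 2 < A)
    (hfreq : 6 * √A ≤ weberFreq A t ^ 3) :
    |weberAction A u t - weberAction A u 0| ≤
      6 * weberAction A u 0 * (√A / weberFreq A t ^ 3) := by
  have hp := weberFreq_pos ht
  have hlt : ∀ s ∈ Icc 0 t, s ^ 2 < A := fun s hs =>
    (pow_le_pow_left₀ hs.1 hs.2 2).trans_lt ht
  have herr := weberActionError_le ht₀ ht
  have hsmall : √A / weberFreq A t ^ 3 ≤ 1 / 6 := by
    rw [div_le_iff₀ (by positivity)]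
    linarith
  have h0 := hlt 0 (left_mem_Icc.2 ht₀)
  have hp0 := weberFreq_pos h0
  have haction0 := weberAction_nonneg u h0
  refine (abs_sub_le_of_abs_deriv_correction_le ht₀
    (HasDerivAt.continuousOn fun s hs => h.hasDerivAt_action (hlt s hs))
    (fun s hs => weberAction_nonneg u (hlt s hs))
    (fun s hs => (h.hasDerivAt_correctedAction (hlt s hs)).differentiableAt.hasDerivAt)
    (fun s hs => (hasDerivAt_weberActionError (hlt s hs)).differentiableAt.hasDerivAt)
    (by rw [weberActionError]; positivity)
    (fun s hs => ?_)
    (fun s hs => abs_correctedWeberAction_sub_le u hs.1 (hlt s hs))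
    (fun s hs => h.abs_deriv_correctedAction_le hs.1 (hlt s hs))
    (by linarith)).trans ?_
  · have hs₀ := hs.1
    have hps := weberFreq_pos (hlt s hs)
    rw [(hasDerivAt_weberActionError (hlt s hs)).deriv]
    positivity
  · calc 4 * weberAction A u 0 * weberActionError A t
        ≤ 4 * weberAction A u 0 * (3 / 2 * (√A / weberFreq A t ^ 3)) := by gcongr
      _ = 6 * weberAction A u 0 * (√A / weberFreq A t ^ 3) := by ring

end IsWeberSolution

lemma hasDerivAt_arcsin_div_sqrt (ht : t ^ 2 < A) :
    HasDerivAt (fun s => arcsin (s / √A)) (1 / weberFreq A t) t := by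
  have hA : 0 < A := (sq_nonneg t).trans_lt ht
  have hsq : (t / √A) ^ 2 < 1 := by
    rwa [div_pow, sq_sqrt hA.le, div_lt_one hA]
  obtain ⟨hlow, hupp⟩ := abs_lt.1 ((sq_lt_one_iff_abs_lt_one _).1 hsq)
  refine (((hasDerivAt_arcsin hlow.ne' hupp.ne).comp t
    ((hasDerivAt_id t).div_const √A))).congr_deriv ?_
  rw [div_mul_div_comm, mul_one, ← sqrt_mul (by linarith), weberFreq, div_pow, sq_sqrt hA.le]
  congr 2
  field_simp

namespace IsWeberSolution

lemma antitoneOn_energy_mul_exp_neg_arcsin (h : IsWeberSolution A u) (ht : t ^ 2 < A) :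
    AntitoneOn (fun s => weberEnergy A u s * exp (-arcsin (s / √A))) (Icc 0 t) := by
  have hlt : ∀ s ∈ Icc 0 t, s ^ 2 < A := fun s hs =>
    (pow_le_pow_left₀ hs.1 hs.2 2).trans_lt ht
  have hderiv := fun s hs =>
    (h.hasDerivAt_energy s).mul (hasDerivAt_arcsin_div_sqrt (hlt s hs)).neg.exp
  refine antitoneOn_of_hasDerivWithinAt_nonpos (convex_Icc 0 t) (HasDerivAt.continuousOn hderiv)
    (fun s hs => (hderiv s (interior_subset hs)).hasDerivWithinAt) fun s hs => ?_
  have hs := interior_subset hs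
  have hgrowth : -(u s * deriv u s) - s * u s ^ 2 ≤ weberEnergy A u s / weberFreq A s := by
    have := neg_abs_le (u s * deriv u s)
    have := abs_mul_deriv_le_weberAction u (hlt s hs)
    have := mul_nonneg hs.1 (sq_nonneg (u s))
    rw [← weberAction]
    linarith
  have := mul_le_mul_of_nonneg_right hgrowth (exp_pos (-arcsin (s / √A))).le
  linear_combination this

lemma energy_le_exp_mul_energy (h : IsWeberSolution A u) {s : ℝ} (hs : 0 ≤ s) (hst : s ≤ t)
    (ht : t ^ 2 < A) : weberEnergy A u t ≤ exp (π / 2) * weberEnergy A u s := by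
  have hanti := h.antitoneOn_energy_mul_exp_neg_arcsin ht ⟨hs, hst⟩ ⟨hs.trans hst, le_rfl⟩ hst
  have hphase_s : 0 ≤ arcsin (s / √A) := arcsin_nonneg.2 (by positivity)
  have hphase_t : arcsin (t / √A) ≤ π / 2 := arcsin_le_pi_div_two _
  have henergy : 0 ≤ weberEnergy A u s :=
    weberEnergy_nonneg u ((pow_le_pow_left₀ hs hst 2).trans ht.le)
  calc weberEnergy A u t
      = exp (arcsin (t / √A)) * (weberEnergy A u t * exp (-arcsin (t / √A))) := by
        rw [mul_left_comm, ← exp_add, add_neg_cancel, exp_zero, mul_one]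
    _ ≤ exp (arcsin (t / √A)) * (weberEnergy A u s * exp (-arcsin (s / √A))) := by gcongr
    _ = exp (arcsin (t / √A) - arcsin (s / √A)) * weberEnergy A u s := by
        rw [mul_left_comm, ← exp_add, ← sub_eq_add_neg, mul_comm]
    _ ≤ exp (π / 2) * weberEnergy A u s := by
        gcongr
        linarith

end IsWeberSolution

end Weber

/-! ### Oscillator wave functions -/

lemma hermiteP_zero (x : ℝ) : hermiteP 0 x = 1 := by
  simp [hermiteP, ← exp_add]

lemma hasDerivAt_hermiteP (n : ℕ) (x : ℝ) :
    HasDerivAt (hermiteP n) (2 * x * hermiteP n x - hermiteP (n + 1) x) x := by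
  have hexp : HasDerivAt (fun t : ℝ => exp (t ^ 2)) (exp (x ^ 2) * (2 * x)) x := by
    simpa using (hasDerivAt_pow 2 x).exp
  have hgauss : HasDerivAt (iteratedDeriv n fun t : ℝ => exp (-t ^ 2))
      (iteratedDeriv (n + 1) (fun t : ℝ => exp (-t ^ 2)) x) x := by
    have hsmooth : ContDiff ℝ (n + 1 : ℕ) fun t : ℝ => exp (-t ^ 2) := by fun_prop
    rw [iteratedDeriv_succ]
    exact (hsmooth.differentiable_iteratedDeriv n (mod_cast n.lt_succ_self) x).hasDerivAt
  refine ((hexp.const_mul ((-1) ^ n)).mul hgauss).congr_deriv ?_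
  simp only [hermiteP]
  ring

lemma hermiteP_one (x : ℝ) : hermiteP 1 x = 2 * x := by
  have h := hasDerivAt_hermiteP 0 x
  rw [funext hermiteP_zero] at h
  linear_combination -h.unique (hasDerivAt_const x 1)

lemma hasDerivAt_hermiteP_succ (n : ℕ) (x : ℝ) :
    HasDerivAt (hermiteP (n + 1)) (2 * (n + 1) * hermiteP n x) x := by
  induction n generalizing x with
  | zero =>
    rw [funext hermiteP_one, hermiteP_zero]
    simpa using (hasDerivAt_id x).const_mul 2
  | succ n ih =>
    have hrec : hermiteP (n + 2) =
        fun t => 2 * t * hermiteP (n + 1) t - 2 * (n + 1) * hermiteP n t :=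
      funext fun t => by linear_combination (ih t).unique (hasDerivAt_hermiteP (n + 1) t)
    rw [hrec]
    refine ((((hasDerivAt_id x).const_mul 2).mul (ih x)).sub
      ((hasDerivAt_hermiteP n x).const_mul _)).congr_deriv ?_
    simp only [id_eq]
    push_cast
    ring

lemma hermiteP_neg (n : ℕ) (x : ℝ) : hermiteP n (-x) = (-1) ^ n * hermiteP n x := by
  have h := iteratedDeriv_comp_neg n (fun t : ℝ => exp (-t ^ 2)) (-x)
  simp only [neg_sq, neg_neg, smul_eq_mul] at h
  simp only [hermiteP, neg_sq, h]
  ring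

lemma osc_neg (n : ℕ) (x : ℝ) : osc n (-x) = (-1) ^ n * osc n x := by
  rw [osc, osc, hermiteP_neg, neg_sq]
  ring

lemma osc_zero_of_odd {n : ℕ} (hn : Odd n) : osc n 0 = 0 := by
  have h := osc_neg n 0
  rw [neg_zero, hn.neg_one_pow] at h
  linarith

lemma sq_sqrt_two_mul_succ (n : ℕ) : √(2 * ((n : ℝ) + 1)) ^ 2 = 2 * (n + 1) :=
  sq_sqrt (by positivity)

lemma sqrt_mul_oscNorm_succ (n : ℕ) : √(2 * (n + 1)) * oscNorm (n + 1) = oscNorm n := by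
  have h : √π * 2 ^ (n + 1) * ((n + 1).factorial : ℝ) =
      2 * (n + 1) * (√π * 2 ^ n * (n.factorial : ℝ)) := by
    rw [Nat.factorial_succ]
    push_cast
    ring
  rw [oscNorm, oscNorm, h, sqrt_mul (x := 2 * ((n : ℝ) + 1)) (by positivity), mul_inv, ← mul_assoc,
    mul_inv_cancel₀ (by positivity), one_mul]

lemma osc_eq (n : ℕ) (x : ℝ) : osc n x = oscNorm n * (exp (-x ^ 2 / 2) * hermiteP n x) :=
  mul_assoc _ _ _

lemma hasDerivAt_exp_neg_sq_div_two (x : ℝ) :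
    HasDerivAt (fun t : ℝ => exp (-t ^ 2 / 2)) (-x * exp (-x ^ 2 / 2)) x :=
  ((hasDerivAt_pow 2 x).neg.div_const 2).exp.congr_deriv (by norm_num; ring)

lemma hasDerivAt_osc (n : ℕ) (x : ℝ) :
    HasDerivAt (osc n) (x * osc n x - √(2 * (n + 1)) * osc (n + 1) x) x := by
  rw [funext (osc_eq n)]
  refine (((hasDerivAt_exp_neg_sq_div_two x).mul
    (hasDerivAt_hermiteP n x)).const_mul _).congr_deriv ?_
  rw [osc_eq, ← sqrt_mul_oscNorm_succ]
  ring

lemma hasDerivAt_osc_succ (n : ℕ) (x : ℝ) :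
    HasDerivAt (osc (n + 1)) (√(2 * (n + 1)) * osc n x - x * osc (n + 1) x) x := by
  rw [funext (osc_eq (n + 1))]
  refine (((hasDerivAt_exp_neg_sq_div_two x).mul
    (hasDerivAt_hermiteP_succ n x)).const_mul _).congr_deriv ?_
  rw [osc_eq n, ← sqrt_mul_oscNorm_succ n]
  linear_combination (-exp (-x ^ 2 / 2) * hermiteP n x * oscNorm (n + 1)) *
    sq_sqrt_two_mul_succ n

lemma deriv_osc_zero (x : ℝ) : deriv (osc 0) x = -x * osc 0 x := by
  rw [funext (osc_eq 0)]
  simp only [hermiteP_zero, mul_one]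
  rw [((hasDerivAt_exp_neg_sq_div_two x).const_mul _).deriv]
  ring

lemma isWeberSolution_osc (n : ℕ) : IsWeberSolution (2 * n) (osc n) where
  differentiable x := (hasDerivAt_osc n x).differentiableAt
  hasDerivAt_deriv x := by
    rw [show deriv (osc n) = _ from funext fun t => (hasDerivAt_osc n t).deriv]
    refine (((hasDerivAt_id x).mul (hasDerivAt_osc n x)).sub
      ((hasDerivAt_osc_succ n x).const_mul _)).congr_deriv ?_
    simp only [id_eq]
    linear_combination -osc n x * sq_sqrt_two_mul_succ n

lemma sum_sq_osc (N : ℕ) (x : ℝ) :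
    ∑ k ∈ Finset.range N, osc k x ^ 2 = weberEnergy (2 * N) (osc N) x := by
  rw [weberEnergy]
  induction N with
  | zero =>
    rw [deriv_osc_zero, Finset.sum_range_zero]
    push_cast
    ring
  | succ N ih =>
    rw [Finset.sum_range_succ, ih, (hasDerivAt_osc N x).deriv, (hasDerivAt_osc_succ N x).deriv]
    push_cast
    linear_combination (osc (N + 1) x ^ 2 - osc N x ^ 2) / 2 * sq_sqrt_two_mul_succ N

lemma sum_sq_osc_neg (N : ℕ) (x : ℝ) :
    ∑ k ∈ Finset.range N, osc k (-x) ^ 2 = ∑ k ∈ Finset.range N, osc k x ^ 2 := by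
  simp only [osc_neg, mul_pow, pow_right_comm _ _ 2, neg_one_sq, one_pow, one_mul]

lemma succ_mul_sq_osc_succ_succ_zero (n : ℕ) :
    (n + 2) * osc (n + 2) 0 ^ 2 = (n + 1) * osc n 0 ^ 2 := by
  have hlower := (hasDerivAt_osc_succ n 0).unique (hasDerivAt_osc (n + 1) 0)
  have hsq := congrArg (· ^ 2) hlower
  simp only [zero_mul, sub_zero, zero_sub, neg_sq, mul_pow, sq_sqrt_two_mul_succ] at hsq
  push_cast at hsq
  linear_combination -hsq / 2

lemma osc_two_mul_zero_pow_four (m : ℕ) :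
    osc (2 * m) 0 ^ 4 * (π * Wallis.W m * (2 * m + 1)) = 1 := by
  induction m with
  | zero =>
    have h : √(√π) ^ 4 = π := by
      rw [show 4 = 2 * 2 from rfl, pow_mul, sq_sqrt (by positivity), sq_sqrt (by positivity)]
    simp [osc, hermiteP_zero, Wallis.W, h]
  | succ m ih =>
    have hstep : osc (2 * m + 2) 0 ^ 2 = (2 * m + 1) / (2 * m + 2) * osc (2 * m) 0 ^ 2 := by
      have h := succ_mul_sq_osc_succ_succ_zero (2 * m)
      push_cast at h
      field_simp
      linear_combination h
    rw [show 2 * (m + 1) = 2 * m + 2 by ring, Wallis.W_succ,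
      show osc (2 * m + 2) 0 ^ 4 = (osc (2 * m + 2) 0 ^ 2) ^ 2 by ring, hstep]
    refine Eq.trans ?_ ih
    push_cast
    field_simp
    ring

lemma sum_sq_osc_zero (N : ℕ) :
    ∑ k ∈ Finset.range N, osc k 0 ^ 2 = N * osc (2 * (N / 2)) 0 ^ 2 := by
  rcases N.even_or_odd' with ⟨m, rfl | rfl⟩
  · rw [sum_sq_osc, weberEnergy, (hasDerivAt_osc (2 * m) 0).deriv,
      osc_zero_of_odd (odd_two_mul_add_one m), Nat.mul_div_cancel_left m two_pos]
    ring
  · rw [sum_sq_osc, weberEnergy, (hasDerivAt_osc_succ (2 * m) 0).deriv,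
      osc_zero_of_odd (odd_two_mul_add_one m), show (2 * m + 1) / 2 = m by omega]
    have h := sq_sqrt_two_mul_succ (2 * m)
    push_cast at h ⊢
    linear_combination osc (2 * m) 0 ^ 2 / 2 * h

lemma pi_div_two_div_W_mem_Icc (m : ℕ) :
    π / 2 / Wallis.W m ∈ Icc 1 ((2 * m + 2 : ℝ) / (2 * m + 1)) := by
  have hW := Wallis.W_pos m
  have hle := Wallis.le_W m
  refine ⟨(one_le_div hW).2 (Wallis.W_le m), ?_⟩
  rw [div_le_iff₀ hW]
  calc π / 2 = (2 * m + 2) / (2 * m + 1) * ((2 * m + 1) / (2 * m + 2) * (π / 2)) := by field_simp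
    _ ≤ (2 * m + 2) / (2 * m + 1) * Wallis.W m := by gcongr

lemma abs_pi_div_two_div_W_sub_one_le {N : ℕ} (hN : N ≠ 0) :
    |π / 2 / Wallis.W (N / 2) * (N / (2 * (N / 2 : ℕ) + 1)) - 1| ≤ 1 / N := by
  obtain ⟨hlow, hupp⟩ := pi_div_two_div_W_mem_Icc (N / 2)
  generalize π / 2 / Wallis.W (N / 2) = r at *
  rcases N.even_or_odd' with ⟨m, rfl | rfl⟩
  · have hm : (1 : ℝ) ≤ m := mod_cast (by omega : 1 ≤ m)
    rw [Nat.mul_div_cancel_left m two_pos] at *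
    push_cast
    rw [abs_of_nonpos, neg_sub, sub_le_comm]
    · calc 1 - 1 / (2 * m : ℝ) ≤ 2 * m / (2 * m + 1) := by field_simp; linarith
        _ ≤ r * (2 * m / (2 * m + 1)) := le_mul_of_one_le_left (by positivity) hlow
    · rw [sub_nonpos]
      calc r * (2 * m / (2 * m + 1))
          ≤ (2 * m + 2) / (2 * m + 1) * (2 * m / (2 * m + 1)) := by gcongr
        _ ≤ 1 := by field_simp; linarith
  · rw [show (2 * m + 1) / 2 = m by omega] at *
    push_cast
    rw [div_self (by positivity), mul_one, abs_of_nonneg (by linarith)]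
    calc r - 1 ≤ (2 * m + 2) / (2 * m + 1) - 1 := by gcongr
      _ = 1 / (2 * m + 1) := by field_simp; ring

/-! ### Bulk and turning point -/

lemma abs_pi_mul_weberAction_osc_zero_sub_one_le {N : ℕ} (hN : N ≠ 0) :
    |π * weberAction (2 * N) (osc N) 0 - 1| ≤ 1 / N := by
  have hN' : (0 : ℝ) < N := mod_cast N.pos_of_ne_zero hN
  set X := π * weberAction (2 * N) (osc N) 0
  have hX : 0 ≤ X := mul_nonneg pi_pos.le (weberAction_nonneg _ (by simpa using hN'))
  have hX2 : X ^ 2 = π / 2 / Wallis.W (N / 2) * (N / (2 * (N / 2 : ℕ) + 1)) := by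
    have hW := Wallis.W_pos (N / 2)
    have hwallis := osc_two_mul_zero_pow_four (N / 2)
    rw [mul_pow, weberAction, ← sum_sq_osc, sum_sq_osc_zero, weberFreq_zero, div_pow,
      sq_sqrt (by positivity)]
    field_simp
    linear_combination hwallis
  have hX1 : 1 ≤ |X + 1| := by
    rw [abs_of_nonneg (by linarith)]
    linarith
  calc |X - 1| ≤ |X + 1| * |X - 1| := le_mul_of_one_le_left (abs_nonneg _) hX1
    _ = |X ^ 2 - 1| := by rw [← abs_mul, ← sq_sub_sq, one_pow]
    _ ≤ 1 / N := hX2 ▸ abs_pi_div_two_div_W_sub_one_le hN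

lemma pi_mul_weberAction_osc_zero_le_two {N : ℕ} (hN : N ≠ 0) :
    π * weberAction (2 * N) (osc N) 0 ≤ 2 := by
  have hinv : 1 / (N : ℝ) ≤ 1 := by simpa only [one_div] using Nat.cast_inv_le_one N
  linarith [(abs_le.1 (abs_pi_mul_weberAction_osc_zero_sub_one_le hN)).2]

lemma abs_pi_mul_weberAction_osc_sub_one_le {N : ℕ} {y : ℝ} (hy₀ : 0 ≤ y) (hy : y ^ 2 < 2 * N)
    (hfreq : 6 * √(2 * N) ≤ weberFreq (2 * N) y ^ 3) :
    |π * weberAction (2 * N) (osc N) y - 1| ≤ 14 * (√(2 * N) / weberFreq (2 * N) y ^ 3) := by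
  have hp := weberFreq_pos hy
  have hN' : (0 : ℝ) < N := by linarith [sq_nonneg y]
  have hN : N ≠ 0 := Nat.cast_ne_zero.1 hN'.ne'
  have hzero := abs_pi_mul_weberAction_osc_zero_sub_one_le hN
  have hcenter : 1 / (N : ℝ) ≤ 2 * (√(2 * N) / weberFreq (2 * N) y ^ 3) := by
    calc 1 / (N : ℝ) = 2 * (√(2 * N) / √(2 * N) ^ 3) := by
          rw [pow_succ', sq_sqrt (by positivity)]
          field_simp
      _ ≤ 2 * (√(2 * N) / weberFreq (2 * N) y ^ 3) := by
          gcongr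
          exact weberFreq_le_sqrt _ _
  have hdrift : |π * weberAction (2 * N) (osc N) y - π * weberAction (2 * N) (osc N) 0| ≤
      12 * (√(2 * N) / weberFreq (2 * N) y ^ 3) := by
    rw [← mul_sub, abs_mul, abs_of_pos pi_pos]
    calc π * |weberAction (2 * N) (osc N) y - weberAction (2 * N) (osc N) 0|
        ≤ π * (6 * weberAction (2 * N) (osc N) 0 * (√(2 * N) / weberFreq (2 * N) y ^ 3)) := by
          gcongr
          exact (isWeberSolution_osc N).abs_action_sub_le hy₀ hy hfreq
      _ = 6 * (π * weberAction (2 * N) (osc N) 0) * (√(2 * N) / weberFreq (2 * N) y ^ 3) := by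
          ring
      _ ≤ 6 * 2 * (√(2 * N) / weberFreq (2 * N) y ^ 3) := by
          gcongr
          exact pi_mul_weberAction_osc_zero_le_two hN
      _ = 12 * (√(2 * N) / weberFreq (2 * N) y ^ 3) := by norm_num
  linarith [abs_sub_le (π * weberAction (2 * N) (osc N) y)
    (π * weberAction (2 * N) (osc N) 0) 1]

lemma abs_sum_sq_osc_sub_le_of_le_weberFreq {N : ℕ} {y : ℝ} (hy₀ : 0 ≤ y) (hy : y ^ 2 < 2 * N)
    (hfreq : 6 * √(2 * N) ≤ weberFreq (2 * N) y ^ 3) :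
    |∑ k ∈ Finset.range N, osc k y ^ 2 - weberFreq (2 * N) y / π| ≤
      14 / π * (√(2 * N) / weberFreq (2 * N) y ^ 2) := by
  have hp := weberFreq_pos hy
  have hsplit : weberEnergy (2 * N) (osc N) y - weberFreq (2 * N) y / π =
      weberFreq (2 * N) y / π * (π * weberAction (2 * N) (osc N) y - 1) := by
    rw [weberAction]
    field_simp
  rw [sum_sq_osc, hsplit, abs_mul, abs_of_pos (by positivity)]
  calc weberFreq (2 * N) y / π * |π * weberAction (2 * N) (osc N) y - 1|
      ≤ weberFreq (2 * N) y / π * (14 * (√(2 * N) / weberFreq (2 * N) y ^ 3)) := by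
        gcongr
        exact abs_pi_mul_weberAction_osc_sub_one_le hy₀ hy hfreq
    _ = 14 / π * (√(2 * N) / weberFreq (2 * N) y ^ 2) := by field_simp

lemma exists_weberFreq_pow_three_le_and_weberAction_le {N : ℕ} {y : ℝ} (hy₀ : 0 ≤ y)
    (hy : y ^ 2 < 2 * N) (hfreq : weberFreq (2 * N) y ^ 3 ≤ 6 * √(2 * N)) :
    ∃ s ∈ Icc 0 y, weberFreq (2 * N) s ^ 3 ≤ 6 * √(2 * N) ∧
      π * weberAction (2 * N) (osc N) s ≤ 10 / 3 := by
  rcases le_total (weberFreq (2 * N) 0 ^ 3) (6 * √(2 * N)) with hcenter | hcenter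
  · have hN : N ≠ 0 := by
      rintro rfl
      norm_num at hy
      exact hy.not_ge (sq_nonneg y)
    have hzero := pi_mul_weberAction_osc_zero_le_two hN
    exact ⟨0, left_mem_Icc.2 hy₀, hcenter, by linarith⟩
  · have hcont : ContinuousOn (fun s => weberFreq (2 * N) s ^ 3) (Icc 0 y) := by
      unfold weberFreq
      fun_prop
    obtain ⟨s, hs, hfreq_s⟩ := intermediate_value_Icc' hy₀ hcont ⟨hfreq, hcenter⟩
    have hslt : s ^ 2 < 2 * N := (pow_le_pow_left₀ hs.1 hs.2 2).trans_lt hy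
    have hbulk := (abs_le.1 (abs_pi_mul_weberAction_osc_sub_one_le hs.1 hslt hfreq_s.ge)).2
    have hratio : √(2 * N) / weberFreq (2 * N) s ^ 3 ≤ 1 / 6 := by
      rw [div_le_iff₀ (pow_pos (weberFreq_pos hslt) 3)]
      linarith
    exact ⟨s, hs, hfreq_s.le, by linarith⟩

lemma exp_pi_div_two_le_nine : exp (π / 2) ≤ 9 :=
  calc exp (π / 2) ≤ exp (1 + 1) := by
        gcongr
        linarith [pi_le_four]
    _ = exp 1 * exp 1 := exp_add 1 1
    _ ≤ 3 * 3 := by gcongr <;> exact exp_one_lt_three.le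
    _ = 9 := by norm_num

lemma abs_sum_sq_osc_sub_le_of_weberFreq_le {N : ℕ} {y : ℝ} (hy₀ : 0 ≤ y) (hy : y ^ 2 < 2 * N)
    (hfreq : weberFreq (2 * N) y ^ 3 ≤ 6 * √(2 * N)) :
    |∑ k ∈ Finset.range N, osc k y ^ 2 - weberFreq (2 * N) y / π| ≤
      60 * (√(2 * N) / weberFreq (2 * N) y ^ 2) := by
  have hp := weberFreq_pos hy
  obtain ⟨s, hs, hfreq_s, haction⟩ :=
    exists_weberFreq_pow_three_le_and_weberAction_le hy₀ hy hfreq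
  have hslt : s ^ 2 < 2 * N := (pow_le_pow_left₀ hs.1 hs.2 2).trans_lt hy
  have hps := weberFreq_pos hslt
  have hmono : weberFreq (2 * N) y ≤ weberFreq (2 * N) s := by
    have := pow_le_pow_left₀ hs.1 hs.2 2
    unfold weberFreq
    gcongr
  have hsum : ∑ k ∈ Finset.range N, osc k y ^ 2 ≤ 10 * weberFreq (2 * N) s := by
    have haction_s : weberAction (2 * N) (osc N) s ≤ 10 / 9 := by
      have := mul_le_mul_of_nonneg_right pi_gt_three.le (weberAction_nonneg (osc N) hslt)
      linarith
    have henergy_s : weberEnergy (2 * N) (osc N) s ≤ 10 / 9 * weberFreq (2 * N) s :=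
      (div_le_iff₀ hps).1 haction_s
    calc ∑ k ∈ Finset.range N, osc k y ^ 2
        = weberEnergy (2 * N) (osc N) y := sum_sq_osc N y
      _ ≤ exp (π / 2) * weberEnergy (2 * N) (osc N) s :=
        (isWeberSolution_osc N).energy_le_exp_mul_energy hs.1 hs.2 hy
      _ ≤ 9 * (10 / 9 * weberFreq (2 * N) s) :=
        mul_le_mul exp_pi_div_two_le_nine henergy_s (weberEnergy_nonneg _ hslt.le) (by norm_num)
      _ = 10 * weberFreq (2 * N) s := by ring
  have hsemicircle : weberFreq (2 * N) y / π ≤ 10 * weberFreq (2 * N) s := by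
    rw [div_le_iff₀ pi_pos]
    nlinarith [pi_gt_three]
  calc |∑ k ∈ Finset.range N, osc k y ^ 2 - weberFreq (2 * N) y / π|
      ≤ 10 * weberFreq (2 * N) s :=
        abs_sub_le_of_nonneg_of_le (Finset.sum_nonneg fun _ _ => sq_nonneg _) hsum
          (by positivity) hsemicircle
    _ = 10 * (weberFreq (2 * N) s ^ 3 / weberFreq (2 * N) s ^ 2) := by field_simp
    _ ≤ 10 * (6 * √(2 * N) / weberFreq (2 * N) y ^ 2) := by gcongr
    _ = 60 * (√(2 * N) / weberFreq (2 * N) y ^ 2) := by ring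

lemma abs_sum_sq_osc_sub_le {N : ℕ} {y : ℝ} (hy : y ^ 2 < 2 * N) :
    |∑ k ∈ Finset.range N, osc k y ^ 2 - weberFreq (2 * N) y / π| ≤
      60 * (√(2 * N) / weberFreq (2 * N) y ^ 2) := by
  wlog hy₀ : 0 ≤ y generalizing y
  · have h := this (y := -y) (by rwa [neg_sq]) (by linarith)
    rwa [sum_sq_osc_neg, show weberFreq (2 * N) (-y) = weberFreq (2 * N) y by
      simp only [weberFreq, neg_sq]] at h
  rcases le_total (weberFreq (2 * N) y ^ 3) (6 * √(2 * N)) with hfreq | hfreq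
  · exact abs_sum_sq_osc_sub_le_of_weberFreq_le hy₀ hy hfreq
  · refine (abs_sum_sq_osc_sub_le_of_le_weberFreq hy₀ hy hfreq).trans ?_
    gcongr
    rw [div_le_iff₀ pi_pos]
    linarith [pi_gt_three]

theorem plancherel_rotach_bulk_general (N : ℕ) (y : ℝ) (hy : y ^ 2 < 2 * N) :
    |(∑ k ∈ Finset.range N, osc k y ^ 2) - (1 / π) * √(2 * N - y ^ 2)| ≤
      90 * √N / (2 * N - y ^ 2) := by
  have hsqrt : √(2 * N) ≤ 3 / 2 * √N := by
    rw [sqrt_mul zero_le_two]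
    gcongr
    exact sqrt_le_iff.2 ⟨by norm_num, by norm_num⟩
  calc |(∑ k ∈ Finset.range N, osc k y ^ 2) - (1 / π) * √(2 * N - y ^ 2)|
      = |∑ k ∈ Finset.range N, osc k y ^ 2 - weberFreq (2 * N) y / π| := by
        rw [one_div_mul_eq_div, weberFreq]
    _ ≤ 60 * (√(2 * N) / weberFreq (2 * N) y ^ 2) := abs_sum_sq_osc_sub_le hy
    _ ≤ 60 * (3 / 2 * √N / weberFreq (2 * N) y ^ 2) := by gcongr
    _ = 90 * √N / (2 * N - y ^ 2) := by
        rw [sq_weberFreq hy.le]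
        ring

lemma sq_sqrt_mul_cos_lt {A τ : ℝ} (hA : 0 < A) (hτ : sin τ ≠ 0) : (√A * cos τ) ^ 2 < A := by
  rw [mul_pow, sq_sqrt hA.le, cos_sq']
  nlinarith [sq_pos_of_ne_zero hτ]

/-- Plancherel–Rotach bulk estimate for the diagonal kernel. -/
theorem plancherel_rotach_bulk (C ε : ℝ) (hC : 0 < C) (hε : 0 < ε) :
    ∃ c : ℝ, 0 < c ∧ ∀ N : ℕ, 1 ≤ N → ∀ τ : ℝ, 0 < τ → τ ≤ Real.pi / 2 →
      C * (N : ℝ) ^ ε ≤ (N : ℝ) * Real.sin τ ^ 3 →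
      |(∑ k ∈ Finset.range N, osc k (Real.sqrt (2 * (N : ℝ)) * Real.cos τ) ^ 2) -
          (1 / Real.pi) *
            Real.sqrt (2 * (N : ℝ) - (Real.sqrt (2 * (N : ℝ)) * Real.cos τ) ^ 2)| ≤
        c * Real.sqrt (N : ℝ) /
          (2 * (N : ℝ) - (Real.sqrt (2 * (N : ℝ)) * Real.cos τ) ^ 2) := by
  refine ⟨90, by norm_num, fun N hN τ hτ hτ_le _ => plancherel_rotach_bulk_general N _ ?_⟩
  exact sq_sqrt_mul_cos_lt (by positivity) (sin_pos_of_pos_of_lt_pi hτ (by linarith [pi_pos])).ne'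
end

section
/- Plancherel–Rotach exterior decay estimate: for every C > 0 and ε > 0 there exists a constant c > 0 such that for every integer N ≥ 1 and every τ > 0 with N sinh³τ ≥ C N^ε, setting y = √(2N) cosh τ, one has Σ_{k=0}^{N-1} ψ_k(y)² ≤ c · √N / (y² − 2N). -/
open Real MeasureTheory Filter Set

/-!
Cauchy's estimate for the `n`-th derivative of `e^{-z²}` on a circle around `y`, whose radius is
tuned to `n` and `τ`, gives the Chernoff-type bound
`ψ_n(y)² ≤ e √(n+1) exp(2nτ - y² tanh τ)`; the exponent is that of Mehler's formula.
At `y = √(2N) cosh τ` the sum over `n < N` is therefore at most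
`e N^{3/2} exp(-N (sinh 2τ - 2τ))`, and with `s = sinh τ` one has
`sinh 2τ - 2τ ≥ s³ / (1 + s)`. This exponential absorbs the factor `N² s²` needed for the claim:
when `s ≤ 1` because `N s³ ≥ C N^ε`, and when `s ≥ 1` because the exponent is at least `N s² / 2`.
-/

lemma iteratedDeriv_ofReal_of_forall_eq {f : ℂ → ℂ} {g : ℝ → ℝ} (hf : Differentiable ℂ f)
    (hfg : ∀ x : ℝ, f x = g x) (n : ℕ) (x : ℝ) : iteratedDeriv n f x = iteratedDeriv n g x := by
  induction n generalizing x with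
  | zero => simpa only [iteratedDeriv_zero] using hfg x
  | succ k ih =>
    have hderiv : HasDerivAt (iteratedDeriv k f) (iteratedDeriv (k + 1) f x) x := by
      rw [iteratedDeriv_succ]
      exact (hf.contDiff.differentiable_iteratedDeriv' k x).hasDerivAt
    have hre : (fun t : ℝ => (iteratedDeriv k f t).re) = iteratedDeriv k g :=
      funext fun t => by rw [ih, Complex.ofReal_re]
    have hreal : DifferentiableAt ℝ (iteratedDeriv k g) x :=
      hre ▸ hderiv.real_of_complex.differentiableAt
    have hrestrict := hderiv.comp_ofReal
    simp only [ih] at hrestrict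
    rw [iteratedDeriv_succ (f := g)]
    exact hrestrict.unique hreal.hasDerivAt.ofReal_comp

lemma re_neg_sq_le {r : ℝ} (hr : 0 < r) (hr1 : r ≤ 1) (z : ℂ) (y : ℝ) :
    (-z ^ 2).re ≤ -y ^ 2 / (1 + r) + ‖z - y‖ ^ 2 / r := by
  have hre : (-z ^ 2).re = z.im ^ 2 - z.re ^ 2 := by
    rw [pow_two, Complex.neg_re, Complex.mul_re]; ring
  have hnorm : ‖z - y‖ ^ 2 = (z.re - y) ^ 2 + z.im ^ 2 := by
    rw [Complex.sq_norm, Complex.normSq_apply, Complex.sub_re, Complex.sub_im, Complex.ofReal_re,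
      Complex.ofReal_im]
    ring
  have him : z.im ^ 2 ≤ z.im ^ 2 / r := le_div_self (sq_nonneg _) hr hr1
  have hsquare : z.re ^ 2 + (z.re - y) ^ 2 / r - y ^ 2 / (1 + r) =
      (y * r + (z.re - y) * (1 + r)) ^ 2 / (r * (1 + r)) := by
    field_simp
    ring
  have hnonneg : 0 ≤ (y * r + (z.re - y) * (1 + r)) ^ 2 / (r * (1 + r)) := by positivity
  rw [hre, hnorm, add_div, neg_div]
  linarith

lemma abs_iteratedDeriv_exp_neg_sq_le (n : ℕ) (y : ℝ) {r ρ : ℝ} (hr : 0 < r) (hr1 : r ≤ 1)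
    (hρ : 0 < ρ) :
    |iteratedDeriv n (fun t : ℝ => exp (-t ^ 2)) y| ≤
      n.factorial * exp (-y ^ 2 / (1 + r) + ρ ^ 2 / r) / ρ ^ n := by
  have hentire : Differentiable ℂ fun z : ℂ => Complex.exp (-z ^ 2) := by fun_prop
  have hrestrict : iteratedDeriv n (fun z : ℂ => Complex.exp (-z ^ 2)) y =
      iteratedDeriv n (fun t : ℝ => exp (-t ^ 2)) y :=
    iteratedDeriv_ofReal_of_forall_eq hentire (fun x => by push_cast; rfl) n y
  rw [← Real.norm_eq_abs, ← Complex.norm_real, ← hrestrict]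
  refine Complex.norm_iteratedDeriv_le_of_forall_mem_sphere_norm_le n hρ hentire.diffContOnCl
    fun z hz => ?_
  rw [mem_sphere_iff_norm] at hz
  rw [Complex.norm_exp, exp_le_exp, ← hz]
  exact re_neg_sq_le hr hr1 z y

lemma osc_sq (n : ℕ) (y : ℝ) :
    osc n y ^ 2 = (√π * 2 ^ n * n.factorial)⁻¹ * exp (y ^ 2) *
      iteratedDeriv n (fun t : ℝ => exp (-t ^ 2)) y ^ 2 := by
  have hsign : ((-1 : ℝ) ^ n) ^ 2 = 1 := by rw [← pow_mul, mul_comm, pow_mul, neg_one_sq, one_pow]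
  have hexp : exp (-y ^ 2 / 2) ^ 2 * exp (y ^ 2) ^ 2 = exp (y ^ 2) := by
    simp only [← exp_nat_mul, ← exp_add]
    congr 1
    push_cast
    ring
  simp only [osc, hermiteP, mul_pow, inv_pow, hsign]
  rw [sq_sqrt (by positivity)]
  linear_combination (√π * 2 ^ n * n.factorial)⁻¹ *
    iteratedDeriv n (fun t : ℝ => exp (-t ^ 2)) y ^ 2 * hexp

lemma osc_sq_le_factorial_mul_exp_div_pow (n : ℕ) (y : ℝ) {r t : ℝ} (hr : 0 < r) (hr1 : r ≤ 1)
    (ht : 0 < t) :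
    osc n y ^ 2 ≤
      n.factorial * exp t / t ^ n * (exp (-(y ^ 2 * ((1 - r) / (1 + r)))) / r ^ n) := by
  set D := iteratedDeriv n (fun x : ℝ => exp (-x ^ 2)) y
  set ρ := √(r * t / 2)
  have hρ_sq : ρ ^ 2 = r * t / 2 := sq_sqrt (by positivity)
  have hcauchy : |D| ≤ n.factorial * exp (-y ^ 2 / (1 + r) + ρ ^ 2 / r) / ρ ^ n :=
    abs_iteratedDeriv_exp_neg_sq_le n y hr hr1 (sqrt_pos.mpr (by positivity))
  have hexp : exp (y ^ 2) * exp (-y ^ 2 / (1 + r) + ρ ^ 2 / r) ^ 2 =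
      exp t * exp (-(y ^ 2 * ((1 - r) / (1 + r)))) := by
    rw [← exp_nat_mul, ← exp_add, ← exp_add, hρ_sq]
    congr 1
    push_cast
    field_simp
    ring
  have hpow : 2 ^ n * (ρ ^ n) ^ 2 = t ^ n * r ^ n := by
    rw [pow_right_comm, hρ_sq, ← mul_pow, ← mul_pow]
    congr 1
    ring
  have hpi : 1 ≤ √π := one_le_sqrt.mpr (by linarith [pi_gt_three])
  calc osc n y ^ 2 = (√π * 2 ^ n * n.factorial)⁻¹ * exp (y ^ 2) * |D| ^ 2 := by
        rw [osc_sq, sq_abs]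
    _ ≤ (1 * 2 ^ n * n.factorial : ℝ)⁻¹ * exp (y ^ 2) *
        (n.factorial * exp (-y ^ 2 / (1 + r) + ρ ^ 2 / r) / ρ ^ n) ^ 2 := by gcongr
    _ = n.factorial * (exp (y ^ 2) * exp (-y ^ 2 / (1 + r) + ρ ^ 2 / r) ^ 2) /
        (2 ^ n * (ρ ^ n) ^ 2) := by field_simp
    _ = n.factorial * exp t / t ^ n * (exp (-(y ^ 2 * ((1 - r) / (1 + r)))) / r ^ n) := by
        rw [hexp, hpow]; field_simp

lemma factorial_le_exp_one_mul_sqrt_mul_pow {n : ℕ} (hn : n ≠ 0) :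
    (n.factorial : ℝ) ≤ exp 1 * √n * (n / exp 1) ^ n := by
  obtain ⟨m, rfl⟩ := Nat.exists_eq_succ_of_ne_zero hn
  have hanti : Stirling.stirlingSeq (m + 1) ≤ Stirling.stirlingSeq 1 :=
    Stirling.stirlingSeq'_antitone m.zero_le
  rw [Stirling.stirlingSeq_one, Stirling.stirlingSeq, div_le_iff₀ (by positivity)] at hanti
  refine hanti.trans_eq ?_
  rw [sqrt_mul zero_le_two]
  field_simp

lemma one_sub_exp_div_one_add_exp_eq_tanh (τ : ℝ) :
    (1 - exp (-(2 * τ))) / (1 + exp (-(2 * τ))) = tanh τ := by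
  have hsplit : exp (-(2 * τ)) = exp (-τ) * exp (-τ) := by rw [← exp_add]; congr 1; ring
  have hinv : exp τ * exp (-τ) = 1 := by rw [← exp_add, add_neg_cancel, exp_zero]
  rw [tanh_eq, div_eq_div_iff (by positivity) (by positivity), hsplit]
  linear_combination (-2 * exp (-τ)) * hinv

lemma osc_sq_le_exp_sub_mul_tanh (n : ℕ) (y : ℝ) {τ : ℝ} (hτ : 0 ≤ τ) :
    osc n y ^ 2 ≤ exp 1 * √(n + 1) * exp (2 * n * τ - y ^ 2 * tanh τ) := by
  have hstirling : n.factorial * exp (n + 1) / ((n : ℝ) + 1) ^ n ≤ exp 1 * √(n + 1) := by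
    have hfact := factorial_le_exp_one_mul_sqrt_mul_pow n.succ_ne_zero
    rw [Nat.factorial_succ, div_pow, pow_succ (n.succ : ℝ), exp_one_pow, ← mul_div_assoc,
      le_div_iff₀ (exp_pos _)] at hfact
    push_cast at hfact
    rw [div_le_iff₀ (by positivity)]
    refine le_of_mul_le_mul_left ?_ n.cast_add_one_pos
    linarith
  have hexp : exp (-(y ^ 2 * tanh τ)) / exp (-(2 * τ)) ^ n =
      exp (2 * n * τ - y ^ 2 * tanh τ) := by
    rw [← exp_nat_mul, ← exp_sub]
    congr 1
    ring
  calc osc n y ^ 2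
      ≤ n.factorial * exp (n + 1) / ((n : ℝ) + 1) ^ n *
          (exp (-(y ^ 2 * tanh τ)) / exp (-(2 * τ)) ^ n) := by
        rw [← one_sub_exp_div_one_add_exp_eq_tanh]
        exact osc_sq_le_factorial_mul_exp_div_pow n y (exp_pos _)
          (exp_le_one_iff.mpr (by linarith)) n.cast_add_one_pos
    _ ≤ exp 1 * √(n + 1) * exp (2 * n * τ - y ^ 2 * tanh τ) := by
        rw [hexp]
        gcongr

lemma sum_osc_sq_le (N : ℕ) (y : ℝ) {τ : ℝ} (hτ : 0 ≤ τ) :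
    ∑ k ∈ Finset.range N, osc k y ^ 2 ≤
      exp 1 * N * √N * exp (2 * N * τ - y ^ 2 * tanh τ) := by
  have hterm : ∀ k ∈ Finset.range N,
      osc k y ^ 2 ≤ exp 1 * √N * exp (2 * N * τ - y ^ 2 * tanh τ) := fun k hk => by
    have hkN : (k : ℝ) + 1 ≤ N := by exact_mod_cast Finset.mem_range.mp hk
    have hkN' : (k : ℝ) ≤ N := by linarith
    refine (osc_sq_le_exp_sub_mul_tanh k y hτ).trans ?_
    gcongr
  calc ∑ k ∈ Finset.range N, osc k y ^ 2
      ≤ N * (exp 1 * √N * exp (2 * N * τ - y ^ 2 * tanh τ)) := by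
        simpa only [Finset.card_range, nsmul_eq_mul] using Finset.sum_le_card_nsmul _ _ _ hterm
    _ = exp 1 * N * √N * exp (2 * N * τ - y ^ 2 * tanh τ) := by ring

lemma sq_sqrt_two_mul_mul_cosh_mul_tanh {a : ℝ} (ha : 0 ≤ a) (τ : ℝ) :
    (√(2 * a) * cosh τ) ^ 2 * tanh τ = a * sinh (2 * τ) := by
  have hcosh := (cosh_pos τ).ne'
  rw [mul_pow, sq_sqrt (by positivity), tanh_eq_sinh_div_cosh, sinh_two_mul]
  field_simp

lemma monotone_sinh_two_mul_sub_sinh_cube_div_cosh :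
    Monotone fun τ : ℝ => sinh (2 * τ) - 2 * τ - sinh τ ^ 3 / cosh τ := by
  have hderiv (τ : ℝ) : HasDerivAt (fun τ : ℝ => sinh (2 * τ) - 2 * τ - sinh τ ^ 3 / cosh τ)
      (sinh τ ^ 2 * (1 + (sinh τ / cosh τ) ^ 2)) τ := by
    have hcosh := (cosh_pos τ).ne'
    have hlin := (hasDerivAt_id τ).const_mul 2
    refine ((hlin.sinh.sub hlin).sub
      (((hasDerivAt_sinh τ).pow 3).div (hasDerivAt_cosh τ) hcosh)).congr_deriv ?_
    simp only [id_eq, Pi.pow_apply, cosh_two_mul]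
    field_simp
    linear_combination 2 * cosh τ ^ 2 * cosh_sq τ
  exact monotone_of_hasDerivAt_nonneg hderiv fun τ => by positivity

lemma sinh_cube_div_one_add_sinh_le {τ : ℝ} (hτ : 0 ≤ τ) :
    sinh τ ^ 3 / (1 + sinh τ) ≤ sinh (2 * τ) - 2 * τ := by
  have hsinh : 0 ≤ sinh τ := sinh_nonneg_iff.mpr hτ
  have hcosh : cosh τ ≤ 1 + sinh τ := by
    have hexp : exp (-τ) ≤ 1 := exp_le_one_iff.mpr (neg_nonpos.mpr hτ)
    linarith [cosh_sub_sinh τ]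
  have hmono : sinh τ ^ 3 / cosh τ ≤ sinh (2 * τ) - 2 * τ := by
    simpa using monotone_sinh_two_mul_sub_sinh_cube_div_cosh hτ
  exact (div_le_div_of_nonneg_left (pow_nonneg hsinh 3) (cosh_pos τ) hcosh).trans hmono

lemma tendsto_rpow_mul_exp_neg_mul_rpow_atTop_nhds_zero (p : ℝ) {b ε : ℝ} (hb : 0 < b)
    (hε : 0 < ε) :
    Tendsto (fun x : ℝ => x ^ p * exp (-b * x ^ ε)) atTop (nhds 0) := by
  refine ((tendsto_rpow_mul_exp_neg_mul_atTop_nhds_zero (p / ε) b hb).comp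
    (tendsto_rpow_atTop hε)).congr' ?_
  filter_upwards [eventually_ge_atTop 0] with x hx
  simp only [Function.comp_apply, ← rpow_mul hx, mul_div_cancel₀ p hε.ne']

lemma sq_mul_exp_neg_half_le {x : ℝ} (hx : 0 ≤ x) : x ^ 2 * exp (-(x / 2)) ≤ 8 := by
  rw [exp_neg, ← div_eq_mul_inv, div_le_iff₀ (exp_pos _)]
  linarith [quadratic_le_exp_of_nonneg (div_nonneg hx zero_le_two)]

lemma exists_sq_mul_sq_mul_exp_neg_le {C ε : ℝ} (hC : 0 < C) (hε : 0 < ε) :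
    ∃ c : ℝ, 0 < c ∧ ∀ N : ℕ, ∀ s : ℝ, 0 < s → C * (N : ℝ) ^ ε ≤ N * s ^ 3 →
      (N * s) ^ 2 * exp (-(N * (s ^ 3 / (1 + s)))) ≤ c := by
  obtain ⟨c₀, hc₀⟩ := ((tendsto_rpow_mul_exp_neg_mul_rpow_atTop_nhds_zero 2 (half_pos hC) hε).comp
    tendsto_natCast_atTop_atTop).bddAbove_range
  refine ⟨max c₀ 8, by positivity, fun N s hs hN => ?_⟩
  rcases le_total s 1 with hs1 | hs1
  · have hexponent : C / 2 * (N : ℝ) ^ ε ≤ N * (s ^ 3 / (1 + s)) := calc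
      C / 2 * (N : ℝ) ^ ε ≤ N * (s ^ 3 / 2) := by linarith
      _ ≤ N * (s ^ 3 / (1 + s)) := by gcongr; linarith
    calc (N * s) ^ 2 * exp (-(N * (s ^ 3 / (1 + s))))
        ≤ (N * 1) ^ 2 * exp (-(C / 2 * (N : ℝ) ^ ε)) := by gcongr
      _ = (N : ℝ) ^ (2 : ℝ) * exp (-(C / 2) * (N : ℝ) ^ ε) := by
        rw [mul_one, rpow_two, neg_mul]
      _ ≤ c₀ := hc₀ (mem_range_self N)
      _ ≤ max c₀ 8 := le_max_left _ _
  · have hexponent : N * s ^ 2 / 2 ≤ N * (s ^ 3 / (1 + s)) := by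
      rw [mul_div_assoc]
      refine mul_le_mul_of_nonneg_left ?_ N.cast_nonneg
      rw [div_le_div_iff₀ two_pos (by positivity)]
      nlinarith [sq_nonneg s]
    calc (N * s) ^ 2 * exp (-(N * (s ^ 3 / (1 + s))))
        ≤ (N * s ^ 2) ^ 2 * exp (-(N * s ^ 2 / 2)) := by
          gcongr
          exact le_self_pow₀ hs1 two_ne_zero
      _ ≤ 8 := sq_mul_exp_neg_half_le (by positivity)
      _ ≤ max c₀ 8 := le_max_right _ _

/-- Plancherel–Rotach exterior decay estimate. -/
theorem plancherel_rotach_exterior (C ε : ℝ) (hC : 0 < C) (hε : 0 < ε) :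
    ∃ c : ℝ, 0 < c ∧ ∀ N : ℕ, 1 ≤ N → ∀ τ : ℝ, 0 < τ →
      C * (N : ℝ) ^ ε ≤ (N : ℝ) * Real.sinh τ ^ 3 →
      (∑ k ∈ Finset.range N, osc k (Real.sqrt (2 * (N : ℝ)) * Real.cosh τ) ^ 2) ≤
        c * Real.sqrt (N : ℝ) /
          ((Real.sqrt (2 * (N : ℝ)) * Real.cosh τ) ^ 2 - 2 * (N : ℝ)) := by
  obtain ⟨c, hc, hbound⟩ := exists_sq_mul_sq_mul_exp_neg_le hC hε
  refine ⟨2 * exp 1 * c, by positivity, fun N hN τ hτ hsinh => ?_⟩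
  have hN0 : (0 : ℝ) < N := by exact_mod_cast hN
  have hs : 0 < sinh τ := sinh_pos_iff.mpr hτ
  set y := √(2 * (N : ℝ)) * cosh τ with hy
  have hden : y ^ 2 - 2 * N = 2 * N * sinh τ ^ 2 := by
    rw [hy, mul_pow, sq_sqrt (by positivity), cosh_sq]; ring
  have hexponent : 2 * N * τ - y ^ 2 * tanh τ ≤ -(N * (sinh τ ^ 3 / (1 + sinh τ))) := by
    have hgap := mul_le_mul_of_nonneg_left (sinh_cube_div_one_add_sinh_le hτ.le) hN0.le
    linarith [sq_sqrt_two_mul_mul_cosh_mul_tanh hN0.le τ]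
  rw [hden, le_div_iff₀ (by positivity)]
  calc (∑ k ∈ Finset.range N, osc k y ^ 2) * (2 * N * sinh τ ^ 2)
      ≤ exp 1 * N * √N * exp (-(N * (sinh τ ^ 3 / (1 + sinh τ)))) * (2 * N * sinh τ ^ 2) := by
        gcongr
        exact (sum_osc_sq_le N y hτ.le).trans (by gcongr)
    _ = 2 * exp 1 * ((N * sinh τ) ^ 2 * exp (-(N * (sinh τ ^ 3 / (1 + sinh τ))))) * √N := by ring
    _ ≤ 2 * exp 1 * c * √N := by
        gcongr
        exact hbound N (sinh τ) hs hsinh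
end

section
/- Uniform supremum bound for oscillator wave functions: there exists a constant c > 0 such that for every integer N ≥ 1, sup_{y ∈ ℝ} |ψ_N(y)| ≤ c · N^{−1/12}. -/
open Real MeasureTheory Filter Set

/-!
Up to normalization, `H_n` is `e^{x²}` times the `n`-th derivative of a Gaussian, and the resulting
ladder relations show that `ψ_n` solves Weber's equation `f'' = (x² - L) f` with `L = 2n + 1`.

With `q = L - x²`, the Liouville transform `u = q^{1/4} f`, `dθ = q^{1/2} dx` turns this equation
into `u_θθ + (1 + Q) u = 0`, where `Q = (2L + 3x²) / (4q³)` increases on `[0, √L)`. Hence Sonin's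
function `u² + u_θ² / (1 + Q)` decreases there, which bounds `√(L - x²) f(x)² = u²` by its value at
`0`, at most `3` for `ψ_n`. So `f² = O(L^{-1/6})` as long as `L - x²` is at least of order
`L^{1/3}`.

To cross the turning point `√L`, consider the maximum `M` of `f²` over `ℝ`. Beyond `√L` the function
`f²` is convex, so `M` is attained in `|x| ≤ √L`. If it is attained at `x` with `L - x²` smaller
than a multiple of `L^{1/3}`, then `(f²)'' ≥ -2 (L - x²) f²` shows that `f²` loses only a small
fraction of `M` over the distance `O(L^{-1/6})` back to the region already controlled.
-/

lemma exists_forall_le_of_tendsto_cocompact_zero {α : Type*} [TopologicalSpace α] [Nonempty α]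
    {F : α → ℝ} (hF : Continuous F) (hF0 : ∀ x, 0 ≤ F x)
    (hlim : Tendsto F (cocompact α) (nhds 0)) : ∃ x, ∀ y, F y ≤ F x := by
  by_cases hpos : ∃ x, 0 < F x
  · obtain ⟨x, hx⟩ := hpos
    exact hF.exists_forall_ge' x ((hlim.eventually_lt_const hx).mono fun _ => le_of_lt)
  · push Not at hpos
    exact ⟨Classical.arbitrary α, fun y => (hpos y).trans (hF0 _)⟩

lemma le_add_of_neg_le_deriv_deriv {F F' F'' : ℝ → ℝ} {a b K : ℝ} (hab : a ≤ b)
    (hF : ∀ x ∈ Icc a b, HasDerivAt F (F' x) x) (hF' : ∀ x ∈ Icc a b, HasDerivAt F' (F'' x) x)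
    (hK : ∀ x ∈ Icc a b, -K ≤ F'' x) (hb : F' b = 0) :
    F b ≤ F a + K / 2 * (b - a) ^ 2 := by
  have hslope : ∀ x ∈ Icc a b, HasDerivAt (fun t => F' t + K * (t - b)) (F'' x + K) x := by
    intro x hx
    exact ((hF' x hx).add (((hasDerivAt_id x).sub_const b).const_mul K)).congr_deriv (by simp)
  have hmono : MonotoneOn (fun t => F' t + K * (t - b)) (Icc a b) :=
    monotoneOn_of_hasDerivWithinAt_nonneg (convex_Icc a b)
      (fun x hx => (hslope x hx).continuousAt.continuousWithinAt)
      (fun x hx => (hslope x (interior_subset hx)).hasDerivWithinAt)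
      (fun x hx => by linarith [hK x (interior_subset hx)])
  have hvalue : ∀ x ∈ Icc a b,
      HasDerivAt (fun t => F t + K / 2 * (t - b) ^ 2) (F' x + K * (x - b)) x := by
    intro x hx
    refine ((hF x hx).add
      ((((hasDerivAt_id x).sub_const b).pow 2).const_mul (K / 2))).congr_deriv ?_
    simp only [Nat.cast_ofNat, id_eq, Nat.add_one_sub_one, pow_one, mul_one, add_right_inj]
    ring
  have hanti : AntitoneOn (fun t => F t + K / 2 * (t - b) ^ 2) (Icc a b) := by
    refine antitoneOn_of_hasDerivWithinAt_nonpos (convex_Icc a b)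
      (fun x hx => (hvalue x hx).continuousAt.continuousWithinAt)
      (fun x hx => (hvalue x (interior_subset hx)).hasDerivWithinAt) fun x hx => ?_
    have hx := interior_subset hx
    simpa [hb] using hmono hx (right_mem_Icc.2 hab) hx.2
  have hends := hanti (left_mem_Icc.2 hab) (right_mem_Icc.2 hab) hab
  simp only [sub_self] at hends
  linarith [sub_sq_comm a b ▸ hends]

/-- Weber's equation `f'' = (x² - L) f` as a first-order system, `g` standing for `f'`. -/
structure IsWeberSolution_s5 (L : ℝ) (f g : ℝ → ℝ) : Prop where
  hasDerivAt (x : ℝ) : HasDerivAt f (g x) x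
  hasDerivAt_deriv (x : ℝ) : HasDerivAt g ((x ^ 2 - L) * f x) x

/-- Sonin's function `u² + u_θ² / (1 + Q)` of the Liouville transform `u = (L - x²)^{1/4} f` of a
solution of Weber's equation, written in terms of `f` and `g = f'`; meaningful for `x² < L`. -/
noncomputable def soninFun (L : ℝ) (f g : ℝ → ℝ) (x : ℝ) : ℝ :=
  √(L - x ^ 2) * (f x ^ 2 + (2 * (L - x ^ 2) * g x - x * f x) ^ 2 /
    (4 * (L - x ^ 2) ^ 3 + 2 * L + 3 * x ^ 2))

lemma soninFun_zero_le {L : ℝ} (hL : 0 < L) (f g : ℝ → ℝ) :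
    soninFun L f g 0 ≤ √L * f 0 ^ 2 + g 0 ^ 2 / √L := by
  have hsq : √L ^ 2 = L := Real.sq_sqrt hL.le
  have hslope : √L * ((2 * L * g 0) ^ 2 / (4 * L ^ 3 + 2 * L)) ≤ g 0 ^ 2 / √L := by
    rw [← mul_div_assoc, div_le_div_iff₀ (by positivity) (by positivity)]
    nlinarith [mul_nonneg hL.le (sq_nonneg (g 0))]
  simpa [soninFun, mul_add] using hslope

namespace IsWeberSolution_s5

variable {L x : ℝ} {f g : ℝ → ℝ}

lemma comp_neg (h : IsWeberSolution_s5 L f g) :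
    IsWeberSolution_s5 L (fun x => f (-x)) (fun x => -g (-x)) where
  hasDerivAt x :=
    ((h.hasDerivAt (-x)).comp x (hasDerivAt_neg x)).congr_deriv (by simp)
  hasDerivAt_deriv x :=
    ((h.hasDerivAt_deriv (-x)).comp x (hasDerivAt_neg x)).neg.congr_deriv (by simp)

lemma hasDerivAt_soninFun (h : IsWeberSolution_s5 L f g) (hx : x ^ 2 < L) :
    HasDerivAt (soninFun L f g)
      (-(6 * x * (3 * L + 2 * x ^ 2) * (2 * (L - x ^ 2) * g x - x * f x) ^ 2) /
        (√(L - x ^ 2) * (4 * (L - x ^ 2) ^ 3 + 2 * L + 3 * x ^ 2) ^ 2)) x := by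
  have hq : HasDerivAt (fun t => L - t ^ 2) (-(2 * x)) x := by
    simpa using (hasDerivAt_pow 2 x).const_sub L
  have hnum : HasDerivAt (fun t => 2 * (L - t ^ 2) * g t - t * f t)
      (-5 * x * g x - (2 * (L - x ^ 2) ^ 2 + 1) * f x) x := by
    refine (((hq.const_mul 2).mul (h.hasDerivAt_deriv x)).sub
      ((hasDerivAt_id x).mul (h.hasDerivAt x))).congr_deriv ?_
    simp only [id_eq]
    ring
  have hden : HasDerivAt (fun t => 4 * (L - t ^ 2) ^ 3 + 2 * L + 3 * t ^ 2)
      (6 * x - 24 * x * (L - x ^ 2) ^ 2) x := by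
    refine ((((hq.pow 3).const_mul 4).add_const (2 * L)).add
      ((hasDerivAt_pow 2 x).const_mul 3)).congr_deriv ?_
    push_cast
    ring
  have hq0 : 0 < L - x ^ 2 := sub_pos.2 hx
  have hden0 : 0 < 4 * (L - x ^ 2) ^ 3 + 2 * L + 3 * x ^ 2 := by
    have : 0 < L := (sq_nonneg x).trans_lt hx
    positivity
  refine ((hq.sqrt hq0.ne').mul (((h.hasDerivAt x).pow 2).add
    ((hnum.pow 2).div hden hden0.ne'))).congr_deriv ?_
  have hr0 : 0 < √(L - x ^ 2) := Real.sqrt_pos.2 hq0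
  have hr : L = √(L - x ^ 2) ^ 2 + x ^ 2 := by rw [Real.sq_sqrt hq0.le]; ring
  simp only [Pi.pow_apply, Pi.add_apply, Pi.div_apply]
  generalize √(L - x ^ 2) = r at hr hr0 ⊢
  subst hr
  field_simp
  push_cast
  ring

lemma antitoneOn_soninFun (h : IsWeberSolution_s5 L f g) :
    AntitoneOn (soninFun L f g) (Ico 0 √L) := by
  have hderiv : ∀ x ∈ Ico 0 √L, HasDerivAt (soninFun L f g) _ x :=
    fun x hx => h.hasDerivAt_soninFun ((Real.lt_sqrt hx.1).1 hx.2)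
  refine antitoneOn_of_hasDerivWithinAt_nonpos (convex_Ico 0 √L)
    (fun x hx => (hderiv x hx).continuousAt.continuousWithinAt)
    (fun x hx => (hderiv x (interior_subset hx)).hasDerivWithinAt) fun x hx => ?_
  have hx0 : 0 ≤ x := (interior_subset hx).1
  have hL : 0 < L := Real.sqrt_pos.1 (hx0.trans_lt (interior_subset hx).2)
  rw [neg_div]
  exact neg_nonpos.2 (by positivity)

lemma sqrt_mul_sq_le_soninFun_zero (h : IsWeberSolution_s5 L f g) (hx0 : 0 ≤ x) (hx : x ^ 2 < L) :
    √(L - x ^ 2) * f x ^ 2 ≤ soninFun L f g 0 := by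
  have hL : 0 < L := (sq_nonneg x).trans_lt hx
  calc √(L - x ^ 2) * f x ^ 2 ≤ soninFun L f g x := by
        have : 0 < L - x ^ 2 := sub_pos.2 hx
        unfold soninFun
        gcongr
        exact le_add_of_nonneg_right (by positivity)
    _ ≤ soninFun L f g 0 :=
        h.antitoneOn_soninFun ⟨le_rfl, Real.sqrt_pos.2 hL⟩ ⟨hx0, (Real.lt_sqrt hx0).2 hx⟩ hx0

lemma hasDerivAt_sq (h : IsWeberSolution_s5 L f g) (x : ℝ) :
    HasDerivAt (fun t => f t ^ 2) (2 * (f x * g x)) x :=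
  ((h.hasDerivAt x).pow 2).congr_deriv (by push_cast; ring)

lemma hasDerivAt_deriv_sq (h : IsWeberSolution_s5 L f g) (x : ℝ) :
    HasDerivAt (fun t => 2 * (f t * g t)) (2 * (g x ^ 2 - (L - x ^ 2) * f x ^ 2)) x :=
  (((h.hasDerivAt x).mul (h.hasDerivAt_deriv x)).const_mul 2).congr_deriv (by ring)

lemma deriv_sq_eq_zero_of_forall_le (h : IsWeberSolution_s5 L f g)
    (hmax : ∀ t, f t ^ 2 ≤ f x ^ 2) : 2 * (f x * g x) = 0 :=
  IsLocalMax.hasDerivAt_eq_zero (Eventually.of_forall hmax) (h.hasDerivAt_sq x)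

lemma sq_le_add_of_forall_le {a : ℝ} (h : IsWeberSolution_s5 L f g) (ha : 0 ≤ a) (hax : a ≤ x)
    (haL : a ^ 2 ≤ L) (hmax : ∀ t, f t ^ 2 ≤ f x ^ 2) :
    f x ^ 2 ≤ f a ^ 2 + (L - a ^ 2) * f x ^ 2 * (x - a) ^ 2 := by
  have hlower : ∀ t ∈ Icc a x,
      -(2 * ((L - a ^ 2) * f x ^ 2)) ≤ 2 * (g t ^ 2 - (L - t ^ 2) * f t ^ 2) := by
    intro t ht
    have hta : L - t ^ 2 ≤ L - a ^ 2 := by gcongr; exact ht.1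
    have hq : (L - t ^ 2) * f t ^ 2 ≤ (L - a ^ 2) * f x ^ 2 :=
      mul_le_mul hta (hmax t) (sq_nonneg _) (sub_nonneg.2 haL)
    linarith [sq_nonneg (g t)]
  simpa using le_add_of_neg_le_deriv_deriv hax (fun t _ => h.hasDerivAt_sq t)
    (fun t _ => h.hasDerivAt_deriv_sq t) hlower (h.deriv_sq_eq_zero_of_forall_le hmax)

lemma mul_sq_le_of_forall_le_of_le {s : ℝ} (h : IsWeberSolution_s5 (s ^ 6) f g) (hs : 1 ≤ s)
    (hx0 : 0 ≤ x) (hx : x ≤ s ^ 3) (hmax : ∀ t, f t ^ 2 ≤ f x ^ 2) :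
    s * f x ^ 2 ≤ 3 * soninFun (s ^ 6) f g 0 := by
  have hs0 : 0 < s := by linarith
  have hs6 : s ^ 2 ≤ s ^ 6 := pow_le_pow_right₀ hs (by norm_num)
  obtain ⟨a, ha0, ha⟩ : ∃ a, 0 ≤ a ∧ s ^ 6 - a ^ 2 = (s / 2) ^ 2 :=
    ⟨√(s ^ 6 - (s / 2) ^ 2), Real.sqrt_nonneg _, by rw [Real.sq_sqrt (by nlinarith)]; ring⟩
  have hbulk : ∀ t, 0 ≤ t → t ≤ a → s / 2 * f t ^ 2 ≤ soninFun (s ^ 6) f g 0 := by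
    intro t ht hta
    have hq : (s / 2) ^ 2 ≤ s ^ 6 - t ^ 2 := ha ▸ by gcongr
    have hts : t ^ 2 < s ^ 6 := by linarith [pow_pos (half_pos hs0) 2]
    calc s / 2 * f t ^ 2 ≤ √(s ^ 6 - t ^ 2) * f t ^ 2 := by gcongr; exact Real.le_sqrt_of_sq_le hq
      _ ≤ soninFun (s ^ 6) f g 0 := h.sqrt_mul_sq_le_soninFun_zero ht hts
  have hmass : 0 ≤ s * f x ^ 2 := by positivity
  rcases le_total x a with hxa | hax
  · linarith [hbulk x hx0 hxa]
  · have hlen : s * (x - a) ≤ 1 / 4 := by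
      have : a ≤ s ^ 3 := hax.trans hx
      refine le_of_mul_le_mul_left ?_ (pow_pos hs0 2)
      calc s ^ 2 * (s * (x - a)) = s ^ 3 * (x - a) := by ring
        _ ≤ (s ^ 3 + a) * (s ^ 3 - a) := by gcongr; linarith
        _ = s ^ 2 * (1 / 4) := by linear_combination ha
    have hloss : (s ^ 6 - a ^ 2) * f x ^ 2 * (x - a) ^ 2 ≤ f x ^ 2 / 64 := by
      have : 0 ≤ s * (x - a) := mul_nonneg hs0.le (sub_nonneg.2 hax)
      calc (s ^ 6 - a ^ 2) * f x ^ 2 * (x - a) ^ 2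
          = (s * (x - a)) ^ 2 * f x ^ 2 / 4 := by rw [ha]; ring
        _ ≤ (1 / 4) ^ 2 * f x ^ 2 / 4 := by gcongr
        _ = f x ^ 2 / 64 := by ring
    have haL : a ^ 2 ≤ s ^ 6 := sub_nonneg.1 (ha ▸ sq_nonneg _)
    have hfa : 63 / 64 * f x ^ 2 ≤ f a ^ 2 := by
      linarith [h.sq_le_add_of_forall_le ha0 hax haL hmax]
    have hsfa : s * (63 / 64 * f x ^ 2) ≤ s * f a ^ 2 := by gcongr
    linarith [hbulk a ha0 le_rfl]

lemma mul_sq_le_of_forall_le {s : ℝ} (h : IsWeberSolution_s5 (s ^ 6) f g) (hs : 1 ≤ s)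
    (hmax : ∀ t, f t ^ 2 ≤ f x ^ 2) : s * f x ^ 2 ≤ 3 * soninFun (s ^ 6) f g 0 := by
  wlog hx0 : 0 ≤ x generalizing f g x
  · simpa [soninFun] using
      this (x := -x) h.comp_neg (by simpa using fun t => hmax (-t)) (by linarith)
  have hs6 : (s ^ 3) ^ 2 = s ^ 6 := by ring
  rcases le_total x (s ^ 3) with hx | hx
  · exact h.mul_sq_le_of_forall_le_of_le hs hx0 hx hmax
  · have hle : f x ^ 2 ≤ f (s ^ 3) ^ 2 := by
      simpa [hs6] using h.sq_le_add_of_forall_le (by positivity) hx hs6.le hmax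
    calc s * f x ^ 2 ≤ s * f (s ^ 3) ^ 2 := by gcongr
      _ ≤ 3 * soninFun (s ^ 6) f g 0 :=
        h.mul_sq_le_of_forall_le_of_le hs (by positivity) le_rfl fun t => (hmax t).trans hle

theorem rpow_mul_sq_le (h : IsWeberSolution_s5 L f g) (hL : 1 ≤ L)
    (hlim : Tendsto f (cocompact ℝ) (nhds 0)) (x : ℝ) :
    L ^ (1 / 6 : ℝ) * f x ^ 2 ≤ 3 * soninFun L f g 0 := by
  have hL0 : 0 ≤ L := by linarith
  have hcont : Continuous f := continuous_iff_continuousAt.2 fun t => (h.hasDerivAt t).continuousAt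
  obtain ⟨y, hy⟩ := exists_forall_le_of_tendsto_cocompact_zero (F := fun t => f t ^ 2)
    (hcont.pow 2) (fun t => sq_nonneg (f t)) (by simpa using hlim.pow 2)
  have hpow : (L ^ (1 / 6 : ℝ)) ^ 6 = L := by
    rw [← Real.rpow_mul_natCast hL0]; norm_num
  have hpeak := mul_sq_le_of_forall_le (hpow.symm ▸ h) (Real.one_le_rpow hL (by norm_num)) hy
  rw [hpow] at hpeak
  exact (mul_le_mul_of_nonneg_left (hy x) (by positivity)).trans hpeak

end IsWeberSolution_s5

lemma hasDerivAt_iteratedDeriv_gaussian (n : ℕ) (x : ℝ) :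
    HasDerivAt (iteratedDeriv n fun t : ℝ => Real.exp (-t ^ 2))
      (iteratedDeriv (n + 1) (fun t : ℝ => Real.exp (-t ^ 2)) x) x := by
  have hsmooth : ContDiff ℝ (n + 1) fun t : ℝ => Real.exp (-t ^ 2) := by fun_prop
  rw [iteratedDeriv_succ]
  exact (hsmooth.differentiable_iteratedDeriv n (by exact_mod_cast n.lt_succ_self) x).hasDerivAt

lemma hermiteP_succ_succ (n : ℕ) (x : ℝ) :
    hermiteP (n + 2) x = 2 * x * hermiteP (n + 1) x - 2 * (n + 1) * hermiteP n x := by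
  induction n generalizing x with
  | zero =>
    have hlinear : HasDerivAt (hermiteP 1) 2 x := by
      rw [funext hermiteP_one]
      simpa using (hasDerivAt_id x).const_mul 2
    have := (hasDerivAt_hermiteP 1 x).unique hlinear
    rw [hermiteP_zero]
    push_cast
    linarith
  | succ n ih =>
    have hrec : HasDerivAt (hermiteP (n + 2))
        (2 * hermiteP (n + 1) x + 2 * x * (2 * x * hermiteP (n + 1) x - hermiteP (n + 2) x)
          - 2 * (n + 1) * (2 * x * hermiteP n x - hermiteP (n + 1) x)) x := by
      rw [funext ih]
      refine ((((hasDerivAt_id x).const_mul 2).mul (hasDerivAt_hermiteP (n + 1) x)).sub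
        ((hasDerivAt_hermiteP n x).const_mul (2 * ((n : ℝ) + 1)))).congr_deriv ?_
      simp [← ih]
    have hderiv := (hasDerivAt_hermiteP (n + 2) x).unique hrec
    push_cast
    linear_combination -hderiv + 2 * x * ih x

lemma sqrt_normalization_succ (n : ℕ) :
    √(√π * 2 ^ (n + 1) * (n + 1).factorial) = √(2 * (n + 1)) * √(√π * 2 ^ n * n.factorial) := by
  rw [← Real.sqrt_mul (by positivity), Nat.factorial_succ]
  push_cast
  ring_nf

lemma sqrt_mul_osc_succ (n : ℕ) (x : ℝ) : √(2 * (n + 1)) * osc (n + 1) x =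
    (√(√π * 2 ^ n * n.factorial))⁻¹ * Real.exp (-x ^ 2 / 2) * hermiteP (n + 1) x := by
  rw [osc, sqrt_normalization_succ]
  field_simp

lemma osc_one (x : ℝ) : osc 1 x = √2 * (x * osc 0 x) := by
  have hstep : √2 * osc 1 x = 2 * (x * osc 0 x) := by
    have := sqrt_mul_osc_succ 0 x
    simp only [Nat.cast_zero, zero_add, mul_one, hermiteP_one] at this
    rw [this, osc, hermiteP_zero]
    ring
  have hsq : √2 ^ 2 = (2 : ℝ) := Real.sq_sqrt zero_le_two
  refine mul_left_cancel₀ (Real.sqrt_ne_zero'.2 zero_lt_two) ?_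
  linear_combination hstep - x * osc 0 x * hsq

lemma sqrt_mul_osc_succ_succ (n : ℕ) (x : ℝ) : √(2 * (n + 2)) * osc (n + 2) x =
    2 * x * osc (n + 1) x - √(2 * (n + 1)) * osc n x := by
  have hsucc := sqrt_mul_osc_succ (n + 1) x
  rw [hermiteP_succ_succ, sqrt_normalization_succ] at hsucc
  push_cast at hsucc
  rw [show (n : ℝ) + 1 + 1 = n + 2 by ring] at hsucc
  have hsq : √(2 * ((n : ℝ) + 1)) ^ 2 = 2 * (n + 1) := Real.sq_sqrt (by positivity)
  rw [hsucc, osc, osc, sqrt_normalization_succ]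
  field_simp
  linear_combination hermiteP n x * hsq

lemma isWeberSolution_osc_s5 (n : ℕ) : IsWeberSolution_s5 (2 * n + 1) (osc n)
    (fun x => x * osc n x - √(2 * (n + 1)) * osc (n + 1) x) where
  hasDerivAt := hasDerivAt_osc n
  hasDerivAt_deriv x := by
    refine (((hasDerivAt_id x).mul (hasDerivAt_osc n x)).sub
      ((hasDerivAt_osc_succ n x).const_mul √(2 * (n + 1)))).congr_deriv ?_
    have hsq : √(2 * ((n : ℝ) + 1)) ^ 2 = 2 * (n + 1) := Real.sq_sqrt (by positivity)
    simp only [id_eq]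
    linear_combination -osc n x * hsq

lemma tendsto_pow_mul_osc_zero_cocompact (k : ℕ) :
    Tendsto (fun x => x ^ k * osc 0 x) (cocompact ℝ) (nhds 0) := by
  have hgauss := (tendsto_rpow_abs_mul_exp_neg_mul_sq_cocompact (one_half_pos (α := ℝ))
    k).const_mul |√√π|⁻¹
  rw [mul_zero] at hgauss
  refine tendsto_zero_iff_norm_tendsto_zero.2 (hgauss.congr fun x => ?_)
  simp only [rpow_natCast, one_div, neg_mul, osc, pow_zero, mul_one, Nat.factorial_zero,
    Nat.cast_one, hermiteP_zero, norm_mul, norm_pow, norm_eq_abs, norm_inv, abs_exp]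
  ring_nf

lemma tendsto_pow_mul_osc_cocompact (n k : ℕ) :
    Tendsto (fun x => x ^ k * osc n x) (cocompact ℝ) (nhds 0) := by
  induction n using Nat.twoStepInduction generalizing k with
  | zero => exact tendsto_pow_mul_osc_zero_cocompact k
  | one =>
    have hlim := (tendsto_pow_mul_osc_zero_cocompact (k + 1)).const_mul √2
    rw [mul_zero] at hlim
    refine hlim.congr fun x => ?_
    rw [osc_one]
    ring
  | more n ih ih' =>
    have hlim := ((ih' (k + 1)).const_mul (2 / √(2 * (n + 2)))).sub
      ((ih k).const_mul (√(2 * (n + 1)) / √(2 * (n + 2))))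
    simp only [mul_zero, sub_zero] at hlim
    refine hlim.congr fun x => ?_
    have hrec := sqrt_mul_osc_succ_succ n x
    field_simp
    linear_combination -x ^ k * hrec

lemma osc_zero_sq_succ_succ (n : ℕ) : osc (n + 2) 0 ^ 2 * (n + 2) = osc n 0 ^ 2 * (n + 1) := by
  have hrec : √(2 * (n + 2)) * osc (n + 2) 0 = -(√(2 * (n + 1)) * osc n 0) := by
    simpa using sqrt_mul_osc_succ_succ n 0
  have hsq := congrArg (· ^ 2) hrec
  simp only [neg_sq, mul_pow] at hsq
  rw [Real.sq_sqrt (by positivity), Real.sq_sqrt (by positivity)] at hsq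
  linear_combination hsq / 2

lemma osc_zero_pow_four_mul_le (n : ℕ) : (osc n 0 ^ 2) ^ 2 * (n + 1) ≤ 1 := by
  induction n using Nat.twoStepInduction with
  | zero =>
    have hosc : osc 0 0 ^ 2 = (√π)⁻¹ := by
      simp [osc, hermiteP_zero, inv_pow]
    rw [hosc, inv_pow, Real.sq_sqrt Real.pi_nonneg]
    simpa using inv_le_one_of_one_le₀ (by linarith [Real.pi_gt_three])
  | one => simp [osc_one]
  | more n ih _ =>
    have hratio : osc (n + 2) 0 ^ 2 = osc n 0 ^ 2 * ((n + 1) / (n + 2)) := by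
      rw [← mul_div_assoc, eq_div_iff (by positivity), osc_zero_sq_succ_succ]
    have hfrac : ((n : ℝ) + 1) * (n + 3) / (n + 2) ^ 2 ≤ 1 := by
      rw [div_le_one (by positivity)]
      linarith
    calc (osc (n + 2) 0 ^ 2) ^ 2 * ((n + 2 : ℕ) + 1)
        = (osc n 0 ^ 2) ^ 2 * (n + 1) * ((n + 1) * (n + 3) / (n + 2) ^ 2) := by
          rw [hratio]
          push_cast
          field_simp
          ring
      _ ≤ 1 := mul_le_one₀ ih (by positivity) hfrac

lemma soninFun_osc_zero_le (n : ℕ) : soninFun (2 * n + 1) (osc n)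
    (fun x => x * osc n x - √(2 * (n + 1)) * osc (n + 1) x) 0 ≤ 3 := by
  have : (0 : ℝ) ≤ n := n.cast_nonneg
  have hsqrt : √(2 * (n : ℝ) + 1) ^ 2 = 2 * n + 1 := Real.sq_sqrt (by positivity)
  have hvalue : √(2 * n + 1) * osc n 0 ^ 2 ≤ 3 / 2 := by
    refine le_of_sq_le_sq ?_ (by norm_num)
    rw [mul_pow, hsqrt]
    nlinarith [osc_zero_pow_four_mul_le n, sq_nonneg (osc n 0 ^ 2)]
  have hslope : 2 * (n + 1) * osc (n + 1) 0 ^ 2 / √(2 * n + 1) ≤ 3 / 2 := by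
    have := osc_zero_pow_four_mul_le (n + 1)
    push_cast at this
    refine le_of_sq_le_sq ?_ (by norm_num)
    rw [div_pow, hsqrt, div_le_iff₀ (by positivity)]
    nlinarith [sq_nonneg (osc (n + 1) 0 ^ 2)]
  refine (soninFun_zero_le (by positivity) _ _).trans ?_
  simp only [zero_mul, zero_sub, neg_sq, mul_pow]
  rw [Real.sq_sqrt (by positivity)]
  linarith

theorem abs_osc_le (n : ℕ) (x : ℝ) : |osc n x| ≤ 3 * (2 * n + 1 : ℝ) ^ (-(1 : ℝ) / 12) := by
  have hL : (1 : ℝ) ≤ 2 * n + 1 := by linarith [n.cast_nonneg (α := ℝ)]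
  have hlim : Tendsto (osc n) (cocompact ℝ) (nhds 0) := by
    simpa only [pow_zero, one_mul] using tendsto_pow_mul_osc_cocompact n 0
  have hbound : (2 * n + 1 : ℝ) ^ (1 / 6 : ℝ) * osc n x ^ 2 ≤ 9 :=
    ((isWeberSolution_osc_s5 n).rpow_mul_sq_le hL hlim x).trans
      (by linarith [soninFun_osc_zero_le n])
  refine abs_le_of_sq_le_sq ?_ (by positivity)
  calc osc n x ^ 2
      = (2 * n + 1 : ℝ) ^ (-(1 / 6) : ℝ) * ((2 * n + 1 : ℝ) ^ (1 / 6 : ℝ) * osc n x ^ 2) := by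
        rw [← mul_assoc, ← Real.rpow_add (by positivity)]
        simp
    _ ≤ (2 * n + 1 : ℝ) ^ (-(1 / 6) : ℝ) * 9 := by gcongr
    _ = (3 * (2 * n + 1 : ℝ) ^ (-(1 : ℝ) / 12)) ^ 2 := by
        rw [mul_pow, ← Real.rpow_mul_natCast (by positivity)]
        norm_num
        ring

/-- Uniform supremum bound for oscillator wave functions. -/
theorem osc_uniform_bound :
    ∃ c : ℝ, 0 < c ∧ ∀ N : ℕ, 1 ≤ N → ∀ y : ℝ,
      |osc N y| ≤ c * (N : ℝ) ^ (-(1 : ℝ) / 12) := by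
  refine ⟨3, by norm_num, fun N hN y => (abs_osc_le N y).trans ?_⟩
  gcongr ?_ * ?_
  have hN0 : (0 : ℝ) < N := by exact_mod_cast hN
  exact Real.rpow_le_rpow_of_nonpos hN0 (by linarith) (by norm_num)
end
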